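/- Given Steiner triple systems V and W, there is an integer N such that for every integer u with u ≥ N and u ≡ 1 or 3 (mod 6), there exists a Steiner triple system U on u points containing a subsystem W' isomorphic to W and a subsystem V'' isomorphic to V with W' ∩ V'' = ∅, such that V'' is invariant under Aut U and the restriction map from Aut U to Aut V'' is a group isomorphism (Aut U induces the full group Aut V'' and Aut U ≅ Aut V''). -/

import Mathlib

open Finset

noncomputable section
open scoped Classical

/-- `T` is the set of triples of a Steiner triple system on the finite type `α`:
every pair of distinct points lies in exactly one triple. -/
def IsSTS {α : Type*} (T : Finset (Finset α)) : Prop :=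
  (∀ t ∈ T, t.card = 3) ∧
    ∀ p q : α, p ≠ q → ∃! t : Finset α, t ∈ T ∧ p ∈ t ∧ q ∈ t

/-- `T` is the set of triples of a partial Steiner triple system on `α`:
every pair of distinct points lies in at most one triple. -/
def IsPSTS {α : Type*} (T : Finset (Finset α)) : Prop :=
  (∀ t ∈ T, t.card = 3) ∧
    ∀ p q : α, p ≠ q → ∀ t₁ ∈ T, ∀ t₂ ∈ T, p ∈ t₁ → q ∈ t₁ → p ∈ t₂ → q ∈ t₂ → t₁ = t₂

/-- `W` is a (closed) subsystem of the triple system `T`. -/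
def IsSub {α : Type*} (T : Finset (Finset α)) (W : Finset α) : Prop :=
  ∀ t ∈ T, 2 ≤ (t ∩ W).card → t ⊆ W

/-- `g` is an automorphism of the triple system `T`. -/
def IsAut {α : Type*} (T : Finset (Finset α)) (g : Equiv.Perm α) : Prop :=
  ∀ t : Finset α, t ∈ T ↔ t.image g ∈ T

/-- The automorphism group of a triple system, as a subgroup of the permutation group. -/
def autGroup {α : Type*} (T : Finset (Finset α)) : Subgroup (Equiv.Perm α) where
  carrier := {g : Equiv.Perm α | IsAut T g}
  one_mem' := by
    intro t
    simp
  mul_mem' := by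
    intro a b ha hb t
    have h1 := hb t
    have h2 := ha (t.image b)
    have key : t.image ⇑(a * b) = (t.image ⇑b).image ⇑a := by
      rw [Equiv.Perm.coe_mul, Finset.image_image]
    rw [key, ← h2]
    exact h1
  inv_mem' := by
    intro a ha t
    have h := ha (t.image ⇑a⁻¹)
    have key : (t.image ⇑a⁻¹).image ⇑a = t := by
      rw [Finset.image_image]
      have hc : (⇑a ∘ ⇑a⁻¹) = id := by
        funext x
        simp
      rw [hc, Finset.image_id]
    rw [key] at h
    exact h.symm

/-- `φ` embeds the triple system `S` onto a subsystem of `T`: it is injective, maps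
triples of `S` to triples of `T`, and the triples of `T` inside the image of `φ` are
precisely the images of the triples of `S`. -/
def IsCopy {α β : Type*} [Fintype α] (S : Finset (Finset α)) (T : Finset (Finset β))
    (φ : α → β) : Prop :=
  Function.Injective φ ∧ (∀ s ∈ S, s.image φ ∈ T) ∧
    ∀ t ∈ T, t ⊆ Finset.univ.image φ → ∃ s ∈ S, t = s.image φ

/-- The point set `W` is invariant under every automorphism of `T`. -/
def AutInvariant {β : Type*} (T : Finset (Finset β)) (W : Finset β) : Prop :=
  ∀ g : Equiv.Perm β, IsAut T g → W.image g = W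

/-- For the copy of `S` inside `T` given by `φ`, restriction gives a group isomorphism
from `Aut T` onto `Aut S`: every automorphism of `T` induces (via `φ`) an automorphism
of `S`, and every automorphism of `S` is induced by exactly one automorphism of `T`. -/
def AutRestrictIso {α β : Type*} (T : Finset (Finset β)) (S : Finset (Finset α))
    (φ : α → β) : Prop :=
  (∀ g : Equiv.Perm β, IsAut T g →
      ∃ h : Equiv.Perm α, IsAut S h ∧ ∀ x : α, g (φ x) = φ (h x)) ∧
    ∀ h : Equiv.Perm α, IsAut S h →
      ∃! g : Equiv.Perm β, IsAut T g ∧ ∀ x : α, g (φ x) = φ (h x)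

/-- `φ` embeds `S` as an `Aut T`-invariant subsystem of `T` on which `Aut T` induces
the full automorphism group of `S`, with `Aut T ≅ Aut S` via restriction. -/
def FullEmbedding {α β : Type*} [Fintype α] (S : Finset (Finset α)) (T : Finset (Finset β))
    (φ : α → β) : Prop :=
  IsCopy S T φ ∧ AutInvariant T (Finset.univ.image φ) ∧ AutRestrictIso T S φ

/-- The points of the projective space `PG(n,2)`: nonzero vectors of `GF(2)^{n+1}`. -/
abbrev PGPoint (n : ℕ) := {x : Fin (n + 1) → ZMod 2 // x ≠ 0}

/-- The lines of `PG(n,2)`: 3-sets of nonzero vectors summing to `0`. -/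
def PGTriples (n : ℕ) : Finset (Finset (PGPoint n)) :=
  Finset.univ.filter fun t : Finset (PGPoint n) =>
    t.card = 3 ∧ ∑ v ∈ t, (v : Fin (n + 1) → ZMod 2) = 0

/-- The smallest subsystem of `T` containing the point set `P`. -/
def GeneratedSub {α : Type*} [Fintype α] (T : Finset (Finset α)) (P : Finset α) : Finset α :=
  Finset.univ.filter fun x => ∀ W : Finset α, IsSub T W → P ⊆ W → x ∈ W

/-- `W` is a subsystem of `T` isomorphic to `PG(n,2)`. -/
def IsPGSub {α : Type*} [Fintype α] (n : ℕ) (T : Finset (Finset α)) (W : Finset α) : Prop :=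
  ∃ φ : PGPoint n → α, IsCopy (PGTriples n) T φ ∧ Finset.univ.image φ = W

/-- A triple system is `PG(2,2)`-paired if any two distinct points lie in at least two
subsystems isomorphic to `PG(2,2)`. -/
def PG22Paired {α : Type*} [Fintype α] (T : Finset (Finset α)) : Prop :=
  ∀ p q : α, p ≠ q → ∃ W₁ W₂ : Finset α, W₁ ≠ W₂ ∧
    (p ∈ W₁ ∧ q ∈ W₁ ∧ IsPGSub 2 T W₁) ∧ p ∈ W₂ ∧ q ∈ W₂ ∧ IsPGSub 2 T W₂

/-- `T` is `PG(3,2)`-2-pointed with respect to the points `p, q`: any four points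
including `p` and `q` generate a subsystem isomorphic to `PG(2,2)` or `PG(3,2)`. -/
def PG32TwoPointed {α : Type*} [Fintype α] (T : Finset (Finset α)) (p q : α) : Prop :=
  p ≠ q ∧ ∀ s : Finset α, s.card = 4 → p ∈ s → q ∈ s →
    IsPGSub 2 T (GeneratedSub T s) ∨ IsPGSub 3 T (GeneratedSub T s)

/-- The copy of `Y` inside `2Y+1`. -/
def dp0 {γ : Type*} (a : γ) : γ ⊕ γ ⊕ Unit := Sum.inl a

/-- The disjoint copy `Y₁` of `Y` inside `2Y+1`. -/
def dp1 {γ : Type*} (a : γ) : γ ⊕ γ ⊕ Unit := Sum.inr (Sum.inl a)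

/-- The extra point `*` of `2Y+1`. -/
def dpStar {γ : Type*} : γ ⊕ γ ⊕ Unit := Sum.inr (Sum.inr ())

/-- The triples of the Steiner triple system `2Y+1` built from a system `Y` with
triple set `T`. -/
def DoubleTriples {γ : Type*} [Fintype γ] (T : Finset (Finset γ)) :
    Finset (Finset (γ ⊕ γ ⊕ Unit)) :=
  Finset.univ.filter fun t : Finset (γ ⊕ γ ⊕ Unit) =>
    (∃ s ∈ T, t = s.image dp0) ∨
    (∃ a : γ, t = {dpStar, dp0 a, dp1 a}) ∨
    (∃ a b c : γ, ({a, b, c} : Finset γ) ∈ T ∧ t = {dp1 a, dp1 b, dp0 c})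

/-- The triples of the direct product of two triple systems. -/
def ProdTriples {α β : Type*} [Fintype α] [Fintype β]
    (TA : Finset (Finset α)) (TB : Finset (Finset β)) : Finset (Finset (α × β)) :=
  Finset.univ.filter fun t : Finset (α × β) =>
    (∃ a : α, ∃ s ∈ TB, t = s.image fun b => (a, b)) ∨
    (∃ b : β, ∃ s ∈ TA, t = s.image fun a => (a, b)) ∨
    (∃ a₁ a₂ a₃ : α, ∃ b₁ b₂ b₃ : β, ({a₁, a₂, a₃} : Finset α) ∈ TA ∧
      ({b₁, b₂, b₃} : Finset β) ∈ TB ∧ t = {(a₁, b₁), (a₂, b₂), (a₃, b₃)})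

/-- The triples of Moore's construction `U = X ∪ (V × A)`.  Here `TX` (on `δ`), `TV`
(on `α`), `TY` (on `γ`) are the triple sets of `X`, `V`, `Y`; `j : δ → γ` embeds `X`
as a subsystem of `Y` and `ℓ : A → γ` labels `Y − X` by the group `A`. -/
def MooreTriples {δ α γ A : Type*} [Fintype δ] [Fintype α] [Fintype A] [Group A]
    (TX : Finset (Finset δ)) (TV : Finset (Finset α)) (TY : Finset (Finset γ))
    (j : δ → γ) (ℓ : A → γ) : Finset (Finset (δ ⊕ α × A)) :=
  Finset.univ.filter fun t : Finset (δ ⊕ α × A) =>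
    (∃ s ∈ TX, t = s.image Sum.inl) ∨
    (∃ v : α, ∃ a₁ a₂ : A, ∃ x : δ, ({ℓ a₁, ℓ a₂, j x} : Finset γ) ∈ TY ∧
      t = {Sum.inr (v, a₁), Sum.inr (v, a₂), Sum.inl x}) ∨
    (∃ v : α, ∃ a₁ a₂ a₃ : A, ({ℓ a₁, ℓ a₂, ℓ a₃} : Finset γ) ∈ TY ∧
      t = {Sum.inr (v, a₁), Sum.inr (v, a₂), Sum.inr (v, a₃)}) ∨
    (∃ v₁ v₂ v₃ : α, ∃ a₁ a₂ a₃ : A, ({v₁, v₂, v₃} : Finset α) ∈ TV ∧ a₁ * a₂ * a₃ = 1 ∧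
      t = {Sum.inr (v₁, a₁), Sum.inr (v₂, a₂), Sum.inr (v₃, a₃)})

/-- The hypotheses of Moore's construction: `Y` and `V` are Steiner triple systems,
`A` is a cyclic group, `j` embeds `X` as a subsystem of `Y` (with triple set `TX`),
and `ℓ` is a bijective labeling of `Y − X` by `A`. -/
def MooreSetup {δ α γ A : Type*} [Fintype δ] [Group A]
    (TX : Finset (Finset δ)) (TV : Finset (Finset α)) (TY : Finset (Finset γ))
    (j : δ → γ) (ℓ : A → γ) : Prop :=
  IsSTS TY ∧ IsSTS TV ∧ IsCyclic A ∧ Function.Injective j ∧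
    IsSub TY (Finset.univ.image j) ∧ IsCopy TX TY j ∧
    Function.Injective ℓ ∧ Set.range ℓ = (Set.range j)ᶜ

/-- The subsystem `Y_v = X ∪ (v × A)` of Moore's construction. -/
def MooreY {δ α A : Type*} [Fintype δ] [Fintype A] (v : α) : Finset (δ ⊕ α × A) :=
  (Finset.univ.image (Sum.inl : δ → δ ⊕ α × A)) ∪
    Finset.univ.image fun a : A => (Sum.inr (v, a) : δ ⊕ α × A)

/-- A subsystem of type (3.1) of Moore's construction, where `ε` denotes the unique
involution `−1` of `A`: the seven points `x, (v_i, a_i), (v_i, −a_i)` for a triple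
`{v₁,v₂,v₃}` of `V`, with `a₁a₂a₃ = 1` and `{a_i, −a_i, x}` a triple of `Y`. -/
def MooreType31 {δ α γ A : Type*} [Group A] (TV : Finset (Finset α))
    (TY : Finset (Finset γ)) (j : δ → γ) (ℓ : A → γ) (ε : A)
    (W : Finset (δ ⊕ α × A)) : Prop :=
  ∃ v₁ v₂ v₃ : α, ∃ a₁ a₂ a₃ : A, ∃ x : δ,
    ({v₁, v₂, v₃} : Finset α) ∈ TV ∧ a₁ * a₂ * a₃ = 1 ∧
    ({ℓ a₁, ℓ (ε * a₁), j x} : Finset γ) ∈ TY ∧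
    ({ℓ a₂, ℓ (ε * a₂), j x} : Finset γ) ∈ TY ∧
    ({ℓ a₃, ℓ (ε * a₃), j x} : Finset γ) ∈ TY ∧
    W = {Sum.inl x, Sum.inr (v₁, a₁), Sum.inr (v₁, ε * a₁), Sum.inr (v₂, a₂),
         Sum.inr (v₂, ε * a₂), Sum.inr (v₃, a₃), Sum.inr (v₃, ε * a₃)}

/-- The point set of a family of triples. -/
def ptsOf {β : Type*} (T : Finset (Finset β)) : Finset β := T.sup id

/-- Adjacency of triples: two distinct triples of `T` meeting in a point. -/
def TriAdj {β : Type*} (T : Finset (Finset β)) (t s : Finset β) : Prop :=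
  t ∈ T ∧ s ∈ T ∧ t ≠ s ∧ (t ∩ s).Nonempty

/-- A partial Steiner triple system is cyclic if the graph whose vertices are its
triples, two joined when they meet, is a cycle (equivalently: it has at least three
triples, every triple meets exactly two others, and the graph is connected). -/
def IsCyclicPSTS {β : Type*} (T : Finset (Finset β)) : Prop :=
  3 ≤ T.card ∧ (∀ t ∈ T, (T.filter fun s => s ≠ t ∧ (s ∩ t).Nonempty).card = 2) ∧
    ∀ t ∈ T, ∀ s ∈ T, Relation.ReflTransGen (TriAdj T) t s

/-- The partial Steiner triple system `Q(z)` (for the parameter `n`), with triple set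
`T`, point set `P` and distinguished point `z`: two cyclic PSTSs `C₁, C₂` on
`2n+4` and `2n+6` points meeting exactly in the point `z`, which lies in two triples
of each, triples `{z, z'_i, z_i}` of `C_i` with `z'_i` in two triples of `C_i`, and a
new point `z'` in the single additional triple `{z'_1, z', z'_2}`. -/
def IsQ {β : Type*} (n : ℕ) (T : Finset (Finset β)) (P : Finset β) (z : β) : Prop :=
  ∃ C₁ C₂ : Finset (Finset β), ∃ z' z₁' z₂' z₁ z₂ : β,
    IsPSTS T ∧ IsCyclicPSTS C₁ ∧ IsCyclicPSTS C₂ ∧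
    (ptsOf C₁).card = 2 * n + 4 ∧ (ptsOf C₂).card = 2 * n + 6 ∧
    ptsOf C₁ ∩ ptsOf C₂ = {z} ∧
    (C₁.filter fun t => z ∈ t).card = 2 ∧ (C₂.filter fun t => z ∈ t).card = 2 ∧
    ({z, z₁', z₁} : Finset β) ∈ C₁ ∧ (C₁.filter fun t => z₁' ∈ t).card = 2 ∧
    ({z, z₂', z₂} : Finset β) ∈ C₂ ∧ (C₂.filter fun t => z₂' ∈ t).card = 2 ∧
    z' ∉ ptsOf C₁ ∪ ptsOf C₂ ∧
    T = C₁ ∪ C₂ ∪ {({z₁', z', z₂'} : Finset β)} ∧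
    P = ptsOf C₁ ∪ ptsOf C₂ ∪ {z'}

/-- Nonempty subsets of `β`: the points of the projective space `P` over `GF(2)`
built on a point set `β`. -/
abbrev NESet (β : Type*) := {s : Finset β // s.Nonempty}

/-- The triples of the projective space over `GF(2)` on the nonempty subsets of `β`:
3-sets of subsets with empty symmetric difference. -/
def sdTriples (β : Type*) [Fintype β] : Finset (Finset (NESet β)) :=
  Finset.univ.filter fun t : Finset (NESet β) =>
    ∃ a b c : NESet β, a ≠ b ∧ a ≠ c ∧ b ≠ c ∧ t = {a, b, c} ∧
      symmDiff (symmDiff a.1 b.1) c.1 = ∅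

/-- The singleton `{a}` as a point of the projective space. -/
def sEl {β : Type*} (a : β) : NESet β := ⟨{a}, Finset.singleton_nonempty a⟩

/-- The pair `{a,b}` as a point of the projective space. -/
def pEl {β : Type*} (a b : β) : NESet β := ⟨{a, b}, Finset.insert_nonempty a {b}⟩

/-- The triples of `P` removed in Cameron's construction, for each triple `{a,b,c}`
of `V'`. -/
def removedTriples {β : Type*} [Fintype β] (TV' : Finset (Finset β)) :
    Finset (Finset (NESet β)) :=
  Finset.univ.filter fun t : Finset (NESet β) =>
    ∃ a b c : β, ({a, b, c} : Finset β) ∈ TV' ∧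
      (t = {pEl a b, pEl a c, pEl b c} ∨ t = {sEl a, sEl b, pEl a b} ∨
       t = {sEl a, sEl c, pEl a c} ∨ t = {sEl b, sEl c, pEl b c})

/-- The new triples of Cameron's construction, for each triple `{a,b,c}` of `V'`. -/
def addedTriples {β : Type*} [Fintype β] (TV' : Finset (Finset β)) :
    Finset (Finset (NESet β)) :=
  Finset.univ.filter fun t : Finset (NESet β) =>
    ∃ a b c : β, ({a, b, c} : Finset β) ∈ TV' ∧
      (t = {sEl a, sEl b, sEl c} ∨ t = {sEl a, pEl a b, pEl a c} ∨
       t = {sEl b, pEl a b, pEl b c} ∨ t = {sEl c, pEl a c, pEl b c})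

/-- The Steiner triple system `U` of Cameron's construction obtained from the
projective space `P` and the partial system `V'`. -/
def CameronSTS {β : Type*} [Fintype β] (TV' : Finset (Finset β)) :
    Finset (Finset (NESet β)) :=
  (sdTriples β \ removedTriples TV') ∪ addedTriples TV'

/-!
A triple system is encoded by its Steiner quasigroup. From a quasigroup on `V`, an abelian group
`A` and a quasigroup `Y` on `X ∪ A` having `X` as a subsystem, Moore's construction produces one on
`X ∪ (V × A)`, in which every automorphism of `V` extends by the identity of `X` and of `A`. The
point is to choose `A`, `X` and `Y` so that nothing else is an automorphism.

Write `u = x + 6 * |V| * m` with `x < m ≤ 2 * x` and `m` free of small prime factors. Let `X` have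
order `x` and contain `W`, put `R = ℤ/m`, and let `A` consist of two copies `B`, `C` of `ℤ/3 × R`.
The points of `X` label matchings between `C` and `B`: three are special, and each `p` in a set
`P ⊆ R` contributes two. In `Y` the copy `B` carries Bose's system, `{x, c, b}` is a triple when the
matching of `x` sends `c` to `b`, and two points of `C` not on a common transversal determined by
`P` have a midpoint in `B` as third point.

The order of a subsystem is controlled by the divisors of `6 * m`, which are either at least `m` or
very small; hence `X` is the only subsystem of its order and every automorphism preserves it.
Translations by the labels connect the points of `A`, so an automorphism permutes the copies
`{v} × A` and acts on each of them through an automorphism of `Y` preserving `X`. The latter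
preserves `B` and the special labels, so it acts on the coordinate `R` by a map `f` and on `ℤ/3` by
a shift. As `1 ∈ P`, we have `f (γ + 1) = f γ + p` for some `p ∈ P`, and the shift is zero; as the
special matchings are twisted by the indicator function of `{0, 1}`, `f` preserves `{0, 1}`; and
exchanging `0` and `1` would force `p = -1 ∉ P`. Hence `f` is the identity.
-/

/-! ### Steiner quasigroups -/

namespace IsSTS

variable {α : Type*} {T : Finset (Finset α)}

lemma ne_of_mem (hT : IsSTS T) {a b c : α} (h : {a, b, c} ∈ T) : a ≠ b ∧ a ≠ c ∧ b ≠ c := by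
  have hcard := hT.1 _ h
  refine ⟨?_, ?_, ?_⟩ <;> rintro rfl
  · rw [insert_idem] at hcard
    exact absurd hcard (card_le_two.trans_lt (by norm_num)).ne
  · rw [pair_comm, insert_idem] at hcard
    exact absurd hcard (card_le_two.trans_lt (by norm_num)).ne
  · rw [pair_eq_singleton] at hcard
    exact absurd hcard (card_le_two.trans_lt (by norm_num)).ne

lemma existsUnique_third (hT : IsSTS T) {a b : α} (hab : a ≠ b) : ∃! c, {a, b, c} ∈ T := by
  obtain ⟨t, ⟨ht, ha, hb⟩, huniq⟩ := hT.2 a b hab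
  have hb' : b ∈ t.erase a := mem_erase.2 ⟨hab.symm, hb⟩
  obtain ⟨c, hc⟩ : ∃ c, (t.erase a).erase b = {c} := by
    rw [← card_eq_one, card_erase_of_mem hb', card_erase_of_mem ha, hT.1 t ht]
  have habc : {a, b, c} ∈ T := by rwa [← hc, insert_erase hb', insert_erase ha]
  refine ⟨c, habc, fun d hd => ?_⟩
  have hdt : {a, b, d} = t := huniq _ ⟨hd, by simp, by simp⟩
  obtain ⟨-, had, hbd⟩ := hT.ne_of_mem hd
  have hd' : d ∈ (t.erase a).erase b := by simp [← hdt, had.symm, hbd.symm]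
  rwa [hc, mem_singleton] at hd'

/-- The third point of the triple through `a` and `b`, with the convention that it is `a` when
`a = b`. -/
def thirdPoint (hT : IsSTS T) (a b : α) : α :=
  if h : a = b then a else (hT.existsUnique_third h).choose

lemma thirdPoint_self (hT : IsSTS T) (a : α) : hT.thirdPoint a a = a := dif_pos rfl

lemma thirdPoint_mem (hT : IsSTS T) {a b : α} (h : a ≠ b) : {a, b, hT.thirdPoint a b} ∈ T := by
  rw [thirdPoint, dif_neg h]
  exact (hT.existsUnique_third h).choose_spec.1

lemma thirdPoint_eq (hT : IsSTS T) {a b c : α} (h : {a, b, c} ∈ T) : hT.thirdPoint a b = c :=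
  have hab := (hT.ne_of_mem h).1
  (hT.existsUnique_third hab).unique (hT.thirdPoint_mem hab) h

end IsSTS

/-- A Steiner quasigroup: the algebraic form of a Steiner triple system, in which `op a b` is
the third point of the triple through `a ≠ b`, and `op a a = a`. -/
structure Squag (α : Type*) where
  op : α → α → α
  op_self : ∀ a, op a a = a
  op_comm : ∀ a b, op a b = op b a
  op_op : ∀ a b, op a (op a b) = b

namespace Squag

variable {α β γ : Type*}

/-- A homomorphism of Steiner quasigroups. -/
def IsHom (s : Squag α) (t : Squag β) (f : α → β) : Prop :=
  ∀ a b, f (s.op a b) = t.op (f a) (f b)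

/-- A sub-quasigroup, that is, the point set of a subsystem. -/
def IsClosed (s : Squag α) (S : Finset α) : Prop :=
  ∀ a ∈ S, ∀ b ∈ S, s.op a b ∈ S

/-- The triples `{a, b, op a b}` of the Steiner triple system described by a quasigroup. -/
def triples [Fintype α] (s : Squag α) : Finset (Finset α) :=
  univ.filter fun t => ∃ a b, a ≠ b ∧ t = {a, b, s.op a b}

lemma op_op_left (s : Squag α) (a b : α) : s.op (s.op a b) a = b := by
  rw [s.op_comm, s.op_op]

lemma op_right_op (s : Squag α) (a b : α) : s.op b (s.op a b) = a := by
  rw [s.op_comm a, s.op_op]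

lemma op_op_right (s : Squag α) (a b : α) : s.op (s.op a b) b = a := by
  rw [s.op_comm, s.op_right_op]

lemma op_left_injective (s : Squag α) (a : α) : Function.Injective (s.op a) :=
  Function.LeftInverse.injective (s.op_op a)

lemma op_ne_left (s : Squag α) {a b : α} (h : a ≠ b) : s.op a b ≠ a := fun h' =>
  h (s.op_left_injective a ((s.op_self a).trans h'.symm))

lemma op_ne_right (s : Squag α) {a b : α} (h : a ≠ b) : s.op a b ≠ b := by
  rw [s.op_comm]
  exact s.op_ne_left h.symm

/-- Transport of the operation along a bijection. -/
def map (s : Squag α) (e : α ≃ β) : Squag β where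
  op a b := e (s.op (e.symm a) (e.symm b))
  op_self a := by simp [s.op_self]
  op_comm a b := by rw [s.op_comm]
  op_op a b := by simp [s.op_op]

lemma isHom_map (s : Squag α) (e : α ≃ β) : IsHom s (s.map e) e := by
  intro a b
  simp [map]

lemma IsHom.comp {s : Squag α} {t : Squag β} {r : Squag γ} {g : β → γ} {f : α → β}
    (hg : IsHom t r g) (hf : IsHom s t f) : IsHom s r (g ∘ f) := by
  intro a b
  simp [hf a b, hg _ _]

lemma IsHom.symm {s : Squag α} {t : Squag β} {g : α ≃ β} (hg : IsHom s t g) :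
    IsHom t s g.symm := by
  intro a b
  rw [Equiv.symm_apply_eq, hg, Equiv.apply_symm_apply, Equiv.apply_symm_apply]

lemma IsHom.image_triple {s : Squag α} {t : Squag β} {f : α → β} (hf : IsHom s t f) (a b : α) :
    ({a, b, s.op a b} : Finset α).image f = {f a, f b, t.op (f a) (f b)} := by
  simp only [image_insert, image_singleton, hf a b]

lemma isClosed_triple (s : Squag α) (a b : α) : s.IsClosed {a, b, s.op a b} := by
  have := s.op_comm b a
  intro p hp q hq
  simp only [mem_insert, mem_singleton] at hp hq
  rcases hp with rfl | rfl | rfl <;> rcases hq with rfl | rfl | rfl <;>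
    simp [s.op_self, s.op_op, s.op_op_left, s.op_right_op, s.op_op_right, *]

lemma card_triple (s : Squag α) {a b : α} (h : a ≠ b) : #{a, b, s.op a b} = 3 :=
  card_eq_three.2 ⟨_, _, _, h, (s.op_ne_left h).symm, (s.op_ne_right h).symm, rfl⟩

section Triples

variable [Fintype α] [Fintype β]

lemma mem_triples (s : Squag α) {t : Finset α} :
    t ∈ s.triples ↔ ∃ a b, a ≠ b ∧ t = {a, b, s.op a b} := by
  simp [triples]

lemma eq_of_mem_triples (s : Squag α) {t : Finset α} (ht : t ∈ s.triples) {p q : α}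
    (hp : p ∈ t) (hq : q ∈ t) (hpq : p ≠ q) : t = {p, q, s.op p q} := by
  obtain ⟨a, b, hab, rfl⟩ := s.mem_triples.1 ht
  refine (eq_of_subset_of_card_le ?_ ?_).symm
  · have := s.isClosed_triple a b p hp q hq
    simp only [insert_subset_iff, singleton_subset_iff]
    exact ⟨hp, hq, this⟩
  · rw [s.card_triple hab, s.card_triple hpq]

lemma isSTS_triples (s : Squag α) : IsSTS s.triples := by
  constructor
  · intro t ht
    obtain ⟨a, b, hab, rfl⟩ := s.mem_triples.1 ht
    exact s.card_triple hab
  · intro p q hpq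
    refine ⟨{p, q, s.op p q}, ⟨s.mem_triples.2 ⟨p, q, hpq, rfl⟩, by simp, by simp⟩, ?_⟩
    rintro t ⟨ht, hp, hq⟩
    exact s.eq_of_mem_triples ht hp hq hpq

lemma exists_triples_eq {T : Finset (Finset α)} (hT : IsSTS T) : ∃ s : Squag α, s.triples = T := by
  let s : Squag α :=
    { op := hT.thirdPoint
      op_self := hT.thirdPoint_self
      op_comm := fun a b => by
        rcases eq_or_ne a b with rfl | hab
        · rfl
        · exact hT.thirdPoint_eq (by rw [insert_comm]; exact hT.thirdPoint_mem hab.symm)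
      op_op := fun a b => by
        rcases eq_or_ne a b with rfl | hab
        · rw [hT.thirdPoint_self, hT.thirdPoint_self]
        · exact hT.thirdPoint_eq (by rw [pair_comm]; exact hT.thirdPoint_mem hab) }
  refine ⟨s, ext fun t => s.mem_triples.trans ⟨?_, fun ht => ?_⟩⟩
  · rintro ⟨a, b, hab, rfl⟩
    exact hT.thirdPoint_mem hab
  · obtain ⟨a, b, c, hab, -, -, rfl⟩ := card_eq_three.1 (hT.1 t ht)
    exact ⟨a, b, hab, by rw [show s.op a b = c from hT.thirdPoint_eq ht]⟩

lemma IsHom.image_mem_triples {s : Squag α} {t : Squag β} {f : α → β} (hf : IsHom s t f)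
    (hi : Function.Injective f) {T : Finset α} (hT : T ∈ s.triples) :
    T.image f ∈ t.triples := by
  obtain ⟨a, b, hab, rfl⟩ := s.mem_triples.1 hT
  exact t.mem_triples.2 ⟨f a, f b, hi.ne hab, hf.image_triple a b⟩

lemma isCopy_of_isHom {s : Squag α} {t : Squag β} {f : α → β} (hf : IsHom s t f)
    (hi : Function.Injective f) : IsCopy s.triples t.triples f := by
  refine ⟨hi, fun T hT => hf.image_mem_triples hi hT, fun T hT hsub => ?_⟩
  obtain ⟨p, q, hpq, rfl⟩ := t.mem_triples.1 hT
  obtain ⟨a, -, rfl⟩ := mem_image.1 (hsub (mem_insert_self _ _))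
  obtain ⟨b, -, rfl⟩ := mem_image.1 (hsub (mem_insert_of_mem (mem_insert_self _ _)))
  exact ⟨_, s.mem_triples.2 ⟨a, b, ne_of_apply_ne f hpq, rfl⟩, (hf.image_triple a b).symm⟩

lemma isSub_image_univ {s : Squag α} {t : Squag β} {f : α → β} (hf : IsHom s t f) :
    IsSub t.triples (univ.image f) := by
  intro T hT hcard
  obtain ⟨p, hp, q, hq, hpq⟩ := one_lt_card.1 hcard
  obtain ⟨hpT, hpf⟩ := mem_inter.1 hp
  obtain ⟨hqT, hqf⟩ := mem_inter.1 hq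
  obtain ⟨a, -, rfl⟩ := mem_image.1 hpf
  obtain ⟨b, -, rfl⟩ := mem_image.1 hqf
  rw [t.eq_of_mem_triples hT hpT hqT hpq, ← hf.image_triple]
  exact image_subset_image (subset_univ _)

lemma isAut_triples_iff (s : Squag α) (g : Equiv.Perm α) : IsAut s.triples g ↔ IsHom s s g := by
  constructor
  · intro hg a b
    rcases eq_or_ne a b with rfl | hab
    · rw [s.op_self, s.op_self]
    have himage := (hg {a, b, s.op a b}).1 (s.mem_triples.2 ⟨a, b, hab, rfl⟩)
    have hmem : g (s.op a b) ∈ ({a, b, s.op a b} : Finset α).image g := by simp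
    rw [s.eq_of_mem_triples himage (p := g a) (q := g b) (by simp) (by simp) (g.injective.ne hab),
      mem_insert, mem_insert, mem_singleton] at hmem
    rcases hmem with h | h | h
    · exact absurd (g.injective h) (s.op_ne_left hab)
    · exact absurd (g.injective h) (s.op_ne_right hab)
    · exact h
  · intro hg t
    refine ⟨hg.image_mem_triples g.injective, fun ht => ?_⟩
    simpa [image_image] using hg.symm.image_mem_triples g.symm.injective ht

end Triples

/-! ### Moore's construction -/

section Moore

variable {X A : Type*}

/-- The inclusion of the copy `X ∪ ({v} × A)` of `X ∪ A` in `X ∪ (α × A)`. -/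
def mooreIncl (v : α) : X ⊕ A → X ⊕ α × A :=
  Sum.map id (Prod.mk v)

@[simp] lemma mooreIncl_inl (v : α) (x : X) : mooreIncl (A := A) v (Sum.inl x) = Sum.inl x := rfl

@[simp] lemma mooreIncl_inr (v : α) (a : A) :
    mooreIncl (X := X) v (Sum.inr a) = Sum.inr (v, a) := rfl

lemma mooreIncl_injective (v : α) : Function.Injective (mooreIncl (X := X) (A := A) v) :=
  Function.injective_id.sumMap (Prod.mk_right_injective v)

lemma exists_eq_mooreIncl_or (p q : X ⊕ α × A) :
    (∃ x y, p = Sum.inl x ∧ q = Sum.inl y) ∨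
      (∃ v p' q', p = mooreIncl v p' ∧ q = mooreIncl v q') ∨
        ∃ v w a b, v ≠ w ∧ p = Sum.inr (v, a) ∧ q = Sum.inr (w, b) := by
  rcases p with x | ⟨v, a⟩ <;> rcases q with y | ⟨w, b⟩
  · exact .inl ⟨x, y, rfl, rfl⟩
  · exact .inr (.inl ⟨w, Sum.inl x, Sum.inr b, rfl, rfl⟩)
  · exact .inr (.inl ⟨v, Sum.inr a, Sum.inl y, rfl, rfl⟩)
  · rcases eq_or_ne v w with rfl | h
    · exact .inr (.inl ⟨v, Sum.inr a, Sum.inr b, rfl, rfl⟩)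
    · exact .inr (.inr ⟨v, w, a, b, h, rfl, rfl⟩)

variable [AddCommGroup A]

/-- The operation of Moore's construction on `X ∪ (α × A)`: that of `Y` inside each copy of
`X ∪ A`, and three points of `α × A` in different copies form a triple when their first
coordinates do and their second coordinates have sum zero. -/
def mooreOp (V : Squag α) (sX : Squag X) (Y : Squag (X ⊕ A)) :
    X ⊕ α × A → X ⊕ α × A → X ⊕ α × A
  | Sum.inl x, Sum.inl y => Sum.inl (sX.op x y)
  | Sum.inl x, Sum.inr (v, a) => mooreIncl v (Y.op (Sum.inl x) (Sum.inr a))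
  | Sum.inr (v, a), Sum.inl x => mooreIncl v (Y.op (Sum.inr a) (Sum.inl x))
  | Sum.inr (v, a), Sum.inr (w, b) =>
      if v = w then mooreIncl v (Y.op (Sum.inr a) (Sum.inr b)) else Sum.inr (V.op v w, -a - b)

variable (V : Squag α) {sX : Squag X} {Y : Squag (X ⊕ A)}

lemma mooreOp_mooreIncl (hY : IsHom sX Y Sum.inl) (v : α) (p q : X ⊕ A) :
    mooreOp V sX Y (mooreIncl v p) (mooreIncl v q) = mooreIncl v (Y.op p q) := by
  rcases p with x | a <;> rcases q with y | b
  · rw [← hY]; rfl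
  · rfl
  · rfl
  · exact if_pos rfl

lemma mooreOp_of_ne {v w : α} (h : v ≠ w) (a b : A) :
    mooreOp V sX Y (Sum.inr (v, a)) (Sum.inr (w, b)) = Sum.inr (V.op v w, -a - b) :=
  if_neg h

variable (hY : IsHom sX Y Sum.inl)

/-- Moore's construction: a Steiner quasigroup on `X ∪ (α × A)` from Steiner quasigroups on
`α` and on `X ∪ A`, the latter having `X` as a subsystem. -/
def moore : Squag (X ⊕ α × A) where
  op := mooreOp V sX Y
  op_self p := by
    rcases p with x | ⟨v, a⟩
    · exact congrArg Sum.inl (sX.op_self x)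
    · rw [← mooreIncl_inr, mooreOp_mooreIncl V hY, Y.op_self]
  op_comm p q := by
    rcases exists_eq_mooreIncl_or p q with
      ⟨x, y, rfl, rfl⟩ | ⟨v, p', q', rfl, rfl⟩ | ⟨v, w, a, b, hvw, rfl, rfl⟩
    · exact congrArg Sum.inl (sX.op_comm x y)
    · rw [mooreOp_mooreIncl V hY, mooreOp_mooreIncl V hY, Y.op_comm]
    · rw [mooreOp_of_ne V hvw, mooreOp_of_ne V hvw.symm, V.op_comm, neg_sub_comm]
  op_op p q := by
    rcases exists_eq_mooreIncl_or p q with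
      ⟨x, y, rfl, rfl⟩ | ⟨v, p', q', rfl, rfl⟩ | ⟨v, w, a, b, hvw, rfl, rfl⟩
    · exact congrArg Sum.inl (sX.op_op x y)
    · rw [mooreOp_mooreIncl V hY, mooreOp_mooreIncl V hY, Y.op_op]
    · rw [mooreOp_of_ne V hvw, mooreOp_of_ne V (V.op_ne_left hvw).symm, V.op_op, sub_sub_cancel]

lemma moore_mooreIncl (v : α) (p q : X ⊕ A) :
    (moore V hY).op (mooreIncl v p) (mooreIncl v q) = mooreIncl v (Y.op p q) :=
  mooreOp_mooreIncl V hY v p q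

lemma moore_of_ne {v w : α} (h : v ≠ w) (a b : A) :
    (moore V hY).op (Sum.inr (v, a)) (Sum.inr (w, b)) = Sum.inr (V.op v w, -a - b) :=
  mooreOp_of_ne (sX := sX) V h a b

lemma isHom_moore_inl : IsHom sX (moore V hY) Sum.inl := fun _ _ => rfl

lemma isHom_moore_zero : IsHom V (moore V hY) fun v => Sum.inr (v, 0) := by
  intro v w
  rcases eq_or_ne v w with rfl | h
  · rw [V.op_self, (moore V hY).op_self]
  · beta_reduce
    rw [moore_of_ne V hY h, neg_zero, sub_zero]

end Moore

/-- The data needed to extend a Steiner quasigroup on `X` to one on `X ∪ B ∪ C`, where `B` is a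
subsystem disjoint from `X` and the triples through a point of `X` match `B` with `C`. -/
structure Frame (X B C : Type*) where
  inner : Squag B
  matching : X → C ≃ B
  mixed : B → C → X ⊕ C
  outer : C → C → B ⊕ C
  outer_self : ∀ c, outer c c = Sum.inr c
  outer_comm : ∀ c d, outer c d = outer d c
  mixed_eq_inl : ∀ b c x, mixed b c = Sum.inl x ↔ matching x c = b
  mixed_eq_inr : ∀ b c d, mixed b c = Sum.inr d ↔ outer c d = Sum.inl b
  outer_of_outer : ∀ c d e, outer c d = Sum.inr e → outer c e = Sum.inr d

namespace Frame

variable {X B C : Type*}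

/-- The operation on `X ∪ B ∪ C` described by a frame. -/
def extendOp (F : Frame X B C) (sX : Squag X) : X ⊕ (B ⊕ C) → X ⊕ (B ⊕ C) → X ⊕ (B ⊕ C)
  | Sum.inl x, Sum.inl y => Sum.inl (sX.op x y)
  | Sum.inl x, Sum.inr (Sum.inl b) => Sum.inr (Sum.inr ((F.matching x).symm b))
  | Sum.inr (Sum.inl b), Sum.inl x => Sum.inr (Sum.inr ((F.matching x).symm b))
  | Sum.inl x, Sum.inr (Sum.inr c) => Sum.inr (Sum.inl (F.matching x c))
  | Sum.inr (Sum.inr c), Sum.inl x => Sum.inr (Sum.inl (F.matching x c))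
  | Sum.inr (Sum.inl b), Sum.inr (Sum.inl b') => Sum.inr (Sum.inl (F.inner.op b b'))
  | Sum.inr (Sum.inl b), Sum.inr (Sum.inr c) => Sum.map id Sum.inr (F.mixed b c)
  | Sum.inr (Sum.inr c), Sum.inr (Sum.inl b) => Sum.map id Sum.inr (F.mixed b c)
  | Sum.inr (Sum.inr c), Sum.inr (Sum.inr c') => Sum.inr (F.outer c c')

lemma mixed_matching (F : Frame X B C) (x : X) (c : C) :
    F.mixed (F.matching x c) c = Sum.inl x :=
  (F.mixed_eq_inl _ _ _).2 rfl

lemma mixed_symm (F : Frame X B C) {b : B} {c d : C} (h : F.mixed b c = Sum.inr d) :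
    F.mixed b d = Sum.inr c := by
  rw [F.mixed_eq_inr, F.outer_comm]
  exact (F.mixed_eq_inr _ _ _).1 h

/-- The Steiner quasigroup on `X ∪ B ∪ C` described by a frame. -/
def extend (F : Frame X B C) (sX : Squag X) : Squag (X ⊕ (B ⊕ C)) where
  op := F.extendOp sX
  op_self p := by
    rcases p with x | b | c
    · simp [extendOp, sX.op_self]
    · simp [extendOp, F.inner.op_self]
    · simp [extendOp, F.outer_self]
  op_comm p q := by
    rcases p with x | b | c <;> rcases q with y | b' | c' <;> simp only [extendOp]
    · rw [sX.op_comm]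
    · rw [F.inner.op_comm]
    · rw [F.outer_comm]
  op_op p q := by
    rcases p with x | b | c <;> rcases q with y | b' | c'
    · simp [extendOp, sX.op_op]
    · simp [extendOp]
    · simp [extendOp]
    · have := F.mixed_matching y ((F.matching y).symm b)
      rw [Equiv.apply_symm_apply] at this
      simp [extendOp, this]
    · simp [extendOp, F.inner.op_op]
    · rcases h : F.mixed b c' with x | d
      · simp [extendOp, h, (Equiv.symm_apply_eq _).2 ((F.mixed_eq_inl _ _ _).1 h).symm]
      · simp [extendOp, h, F.mixed_symm h]
    · simp [extendOp, F.mixed_matching]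
    · rcases h : F.mixed b' c with x | d
      · simp [extendOp, h, (F.mixed_eq_inl _ _ _).1 h]
      · simp [extendOp, h, (F.mixed_eq_inr _ _ _).1 h]
    · rcases h : F.outer c c' with b | d
      · simp [extendOp, h, (F.mixed_eq_inr _ _ _).2 h]
      · simp [extendOp, h, F.outer_of_outer _ _ _ h]

lemma isHom_extend_inl (F : Frame X B C) (sX : Squag X) :
    IsHom sX (F.extend sX) Sum.inl := fun _ _ => rfl

end Frame

/-! ### Bose's construction -/

lemma zmod_three_eq (i : ZMod 3) : i = 0 ∨ i = 1 ∨ i = 2 := by revert i; decide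

lemma zmod_three_eq_or_eq_add_one (i j : ZMod 3) : j = i ∨ j = i + 1 ∨ i = j + 1 := by
  revert i j; decide

lemma zmod_three_ne_add_two (i : ZMod 3) : i ≠ i + 1 + 1 := by revert i; decide

lemma zmod_three_ne_neg_sub {i j : ZMod 3} (h : i ≠ j) : i ≠ -i - j := by
  revert i j; decide

section Bose

variable {R : Type*} [CommRing R] [Invertible (2 : R)]

lemma invOf_two_mul_add_eq_iff {a b c : R} : ⅟2 * (a + b) = c ↔ b = 2 * c - a := by
  rw [invOf_mul_eq_iff_eq_mul_left, eq_sub_iff_add_eq']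

/-- The operation of Bose's construction on `ℤ/3 × R`. -/
def boseOp (p q : ZMod 3 × R) : ZMod 3 × R :=
  if p.1 = q.1 then if p.2 = q.2 then p else (p.1 + 1, ⅟2 * (p.2 + q.2))
  else if p.2 = q.2 then (-p.1 - q.1, p.2)
  else if q.1 = p.1 + 1 then (p.1, 2 * q.2 - p.2)
  else (q.1, 2 * p.2 - q.2)

lemma boseOp_same (i : ZMod 3) {a b : R} (h : a ≠ b) :
    boseOp (i, a) (i, b) = (i + 1, ⅟2 * (a + b)) := by simp [boseOp, h]

lemma boseOp_level {i j : ZMod 3} (h : i ≠ j) (a : R) :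
    boseOp (i, a) (j, a) = (-i - j, a) := by simp [boseOp, h]

lemma boseOp_up (i : ZMod 3) {a b : R} (h : a ≠ b) :
    boseOp (i, a) (i + 1, b) = (i, 2 * b - a) := by
  simp [boseOp, h]

lemma boseOp_down (i : ZMod 3) {a b : R} (h : a ≠ b) :
    boseOp (i + 1, a) (i, b) = (i, 2 * a - b) := by
  simp [boseOp, h, zmod_three_ne_add_two i]

lemma boseOp_comm (p q : ZMod 3 × R) : boseOp p q = boseOp q p := by
  obtain ⟨i, a⟩ := p
  obtain ⟨j, b⟩ := q
  rcases eq_or_ne a b with rfl | hab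
  · rcases eq_or_ne i j with rfl | hij
    · rfl
    · rw [boseOp_level hij, boseOp_level hij.symm, neg_sub_comm]
  rcases zmod_three_eq_or_eq_add_one i j with rfl | rfl | rfl
  · rw [boseOp_same _ hab, boseOp_same _ hab.symm, add_comm a]
  · rw [boseOp_up _ hab, boseOp_down _ hab.symm]
  · rw [boseOp_up _ hab.symm, boseOp_down _ hab]

lemma boseOp_boseOp (p q : ZMod 3 × R) : boseOp p (boseOp p q) = q := by
  obtain ⟨i, a⟩ := p
  obtain ⟨j, b⟩ := q
  have half : (2 : R) * ⅟2 = 1 := mul_invOf_self 2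
  rcases eq_or_ne a b with rfl | hab
  · rcases eq_or_ne i j with rfl | hij
    · simp [boseOp]
    · rw [boseOp_level hij, boseOp_level (zmod_three_ne_neg_sub hij), sub_sub_cancel]
  rcases zmod_three_eq_or_eq_add_one i j with rfl | rfl | rfl
  · have hne : a ≠ ⅟2 * (a + b) := fun h =>
      hab (by linear_combination 2 * h + (a + b) * half)
    rw [boseOp_same _ hab, boseOp_up _ hne, Prod.mk.injEq]
    exact ⟨rfl, by linear_combination (a + b) * half⟩
  · have hne : a ≠ 2 * b - a := fun h => hab (by linear_combination ⅟2 * h - (a - b) * half)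
    rw [boseOp_up _ hab, boseOp_same _ hne, Prod.mk.injEq]
    exact ⟨rfl, by linear_combination b * half⟩
  · have hne : a ≠ 2 * a - b := fun h => hab (by linear_combination -h)
    rw [boseOp_down _ hab, boseOp_down _ hne, sub_sub_cancel]

variable (R) in
/-- Bose's Steiner quasigroup on `ℤ/3 × R`. -/
def bose : Squag (ZMod 3 × R) where
  op := boseOp
  op_self p := by simp [boseOp]
  op_comm := boseOp_comm
  op_op := boseOp_boseOp

end Bose

/-! ### Labels, matchings and transversals -/

section Labels

variable {R : Type*}

/-- The labels of matchings between two copies of `ℤ/3 × R`: three special ones, and two for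
each element of `P`. -/
abbrev Label (P : Finset R) := ZMod 3 ⊕ ({s : ZMod 3 // s ≠ 0} × P)

lemma card_label (P : Finset R) : Fintype.card (Label P) = 3 + 2 * #P := by
  have : Fintype.card {s : ZMod 3 // s ≠ 0} = 2 := rfl
  rw [Fintype.card_sum, Fintype.card_prod, this, ZMod.card, Fintype.card_coe]

variable [CommRing R]

/-- The representative `0`, `1` or `2` of a residue modulo `3`, as an element of `R`. -/
def rep (i : ZMod 3) : R := i.val

@[simp] lemma rep_zero : rep (R := R) 0 = 0 := Nat.cast_zero

@[simp] lemma rep_one : rep (R := R) 1 = 1 := Nat.cast_one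

@[simp] lemma rep_two : rep (R := R) 2 = 2 := Nat.cast_ofNat

lemma eq_zero_of_rep_sub_mul [Invertible (2 : R)] {i j : ZMod 3} (hij : i ≠ j) {r : R}
    (h : (rep i - rep j) * r = 0) : r = 0 := by
  have half : (2 : R) * ⅟2 = 1 := mul_invOf_self 2
  rcases zmod_three_eq i with rfl | rfl | rfl <;> rcases zmod_three_eq j with rfl | rfl | rfl <;>
    simp only [rep_zero, rep_one, rep_two] at h
  · exact absurd rfl hij
  · linear_combination -h
  · linear_combination -⅟2 * h - r * half
  · linear_combination h
  · exact absurd rfl hij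
  · linear_combination -h
  · linear_combination ⅟2 * h - r * half
  · linear_combination h
  · exact absurd rfl hij

variable {P : Finset R} (e : R → ZMod 3)

/-- The matching of two copies of `ℤ/3 × R` attached to a label; the special labels are twisted
by `e`. The label `(s, p)` matches a point `(i, γ)` with the midpoint, in the sense of `midPt`, of
itself and the point of level `i - s` on its transversal with parameter `p`. -/
def labelMatching : Label P → (ZMod 3 × R) ≃ (ZMod 3 × R)
  | Sum.inl s =>
    { toFun := fun c => (c.1 + s + e c.2, c.2)
      invFun := fun b => (b.1 - s - e b.2, b.2)
      left_inv := fun c => Prod.ext (by ring) rfl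
      right_inv := fun b => Prod.ext (by ring) rfl }
  | Sum.inr (s, p) =>
    { toFun := fun c => (c.1 + s, c.2 + (rep (c.1 - s) - rep c.1) * p)
      invFun := fun b => (b.1 - s, b.2 - (rep (b.1 - s - s) - rep (b.1 - s)) * p)
      left_inv := fun c => by ext1 <;> simp
      right_inv := fun b => by ext1 <;> simp }

@[simp] lemma labelMatching_inl (s i : ZMod 3) (γ : R) :
    labelMatching (P := P) e (Sum.inl s) (i, γ) = (i + s + e γ, γ) := rfl

@[simp] lemma labelMatching_inr (s : {s : ZMod 3 // s ≠ 0}) (p : P) (i : ZMod 3) (γ : R) :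
    labelMatching e (Sum.inr (s, p)) (i, γ) = (i + s, γ + (rep (i - s) - rep i) * p) := rfl

/-- The points `c` and `d` lie on a common transversal `{(i, a + 2 * i * p) | i = 0, 1, 2}` of
`ℤ/3 × R`, with parameter `p ∈ P ∪ {0}`. -/
def Joined (P : Finset R) (c d : ZMod 3 × R) (p : R) : Prop :=
  p ∈ insert 0 P ∧ d.2 = c.2 + 2 * (rep d.1 - rep c.1) * p

lemma Joined.symm {c d : ZMod 3 × R} {p : R} (h : Joined P c d p) : Joined P d c p :=
  ⟨h.1, by linear_combination -h.2⟩

lemma joined_self (P : Finset R) (c : ZMod 3 × R) : Joined P c c 0 :=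
  ⟨mem_insert_self _ _, by ring⟩

lemma Joined.fst_ne {c d : ZMod 3 × R} {p : R} (h : Joined P c d p) (hcd : c ≠ d) :
    c.1 ≠ d.1 := by
  intro h1
  refine hcd (Prod.ext h1 ?_)
  rw [h.2, h1]
  ring

variable [Invertible (2 : R)]

lemma labelMatching_injective (hP : 0 ∉ P) (c : ZMod 3 × R) :
    Function.Injective fun x : Label P => labelMatching e x c := by
  obtain ⟨i, γ⟩ := c
  have eq_zero (s : {s : ZMod 3 // s ≠ 0}) (r : R) (h : (rep (i - s) - rep i) * r = 0) :
      r = 0 :=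
    eq_zero_of_rep_sub_mul (fun h' => s.2 (sub_eq_self.1 h')) h
  rintro (s | ⟨s, p⟩) (s' | ⟨s', p'⟩) h
  · simpa using h
  · simp only [labelMatching_inl, labelMatching_inr, Prod.mk.injEq] at h
    exact absurd (eq_zero s' p' (by linear_combination -h.2)) fun h0 => hP (h0 ▸ p'.2)
  · simp only [labelMatching_inl, labelMatching_inr, Prod.mk.injEq] at h
    exact absurd (eq_zero s p (by linear_combination h.2)) fun h0 => hP (h0 ▸ p.2)
  · simp only [labelMatching_inr, Prod.mk.injEq, add_right_inj] at h
    obtain rfl := Subtype.ext h.1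
    have hp := eq_zero s (p - p') (by linear_combination h.2)
    rw [Subtype.ext (sub_eq_zero.1 hp)]

lemma Joined.unique {c d : ZMod 3 × R} {p q : R} (h : Joined P c d p)
    (h' : Joined P c d q) (hcd : c ≠ d) : p = q := by
  have half : (2 : R) * ⅟2 = 1 := mul_invOf_self 2
  refine sub_eq_zero.1 (eq_zero_of_rep_sub_mul (h.fst_ne hcd).symm ?_)
  linear_combination ⅟2 * (h'.2 - h.2) - (rep d.1 - rep c.1) * (p - q) * half

/-- The third point of the triple through two points that are not joined. -/
def midPt (c d : ZMod 3 × R) : ZMod 3 × R := (-c.1 - d.1, ⅟2 * (c.2 + d.2))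

lemma midPt_comm (c d : ZMod 3 × R) : midPt c d = midPt d c := by
  rw [midPt, midPt, neg_sub_comm, add_comm c.2]

lemma midPt_eq_iff {b c d : ZMod 3 × R} :
    midPt c d = b ↔ (-b.1 - c.1, 2 * b.2 - c.2) = d := by
  rw [midPt, Prod.ext_iff, Prod.ext_iff, invOf_two_mul_add_eq_iff, eq_comm (b := d.2)]
  refine and_congr_left fun _ => ⟨fun h => ?_, fun h => ?_⟩ <;> linear_combination h

lemma exists_labelMatching_eq_midPt_iff {c d : ZMod 3 × R} :
    (∃ x : Label P, labelMatching e x c = midPt c d) ↔ ∃ p, Joined P c d p := by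
  obtain ⟨i, γ⟩ := c
  obtain ⟨j, δ⟩ := d
  have h3 : (3 : ZMod 3) = 0 := rfl
  have half : (2 : R) * ⅟2 = 1 := mul_invOf_self 2
  constructor
  · rintro ⟨s | ⟨s, p⟩, h⟩ <;>
      simp only [labelMatching_inl, labelMatching_inr, midPt, Prod.mk.injEq] at h <;>
      obtain ⟨h1, h2⟩ := h <;> rw [eq_comm, invOf_two_mul_add_eq_iff] at h2
    · exact ⟨0, mem_insert_self _ _, by linear_combination h2⟩
    · have his : i - s = j := by linear_combination -h1 + i * h3
      rw [his] at h2
      exact ⟨p, mem_insert_of_mem p.2, by linear_combination h2⟩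
  · rintro ⟨p, hp⟩
    have hδ : δ = γ + 2 * (rep j - rep i) * p := hp.2
    rcases eq_or_ne γ δ with rfl | hγδ
    · refine ⟨Sum.inl (i - j - e γ), ?_⟩
      simp only [labelMatching_inl, midPt, Prod.mk.injEq]
      exact ⟨by linear_combination i * h3, by linear_combination -γ * half⟩
    · have hij : i ≠ j := hp.fst_ne fun h => hγδ (congrArg Prod.snd h)
      have hpP : p ∈ P := (mem_insert.1 hp.1).resolve_left fun h0 => hγδ (by rw [hδ, h0]; ring)
      refine ⟨Sum.inr (⟨i - j, sub_ne_zero.2 hij⟩, ⟨p, hpP⟩), ?_⟩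
      simp only [labelMatching_inr, midPt, Prod.mk.injEq, sub_sub_cancel]
      exact ⟨by linear_combination i * h3,
        by linear_combination -⅟2 * hδ - (γ + (rep j - rep i) * p) * half⟩

/-- The operation between the two copies of `ℤ/3 × R`. -/
def mixedOp (P : Finset R) (b c : ZMod 3 × R) : Label P ⊕ (ZMod 3 × R) :=
  if h : ∃ x : Label P, labelMatching e x c = b then Sum.inl h.choose
  else Sum.inr (-b.1 - c.1, 2 * b.2 - c.2)

/-- The operation inside the second copy of `ℤ/3 × R`: joined points have the third point of
their transversal, the others have their midpoint in the first copy. -/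
def outerOp (P : Finset R) (c d : ZMod 3 × R) : (ZMod 3 × R) ⊕ (ZMod 3 × R) :=
  if c = d then Sum.inr c
  else if h : ∃ p, Joined P c d p then
    Sum.inr (-c.1 - d.1, c.2 + 2 * (rep (-c.1 - d.1) - rep c.1) * h.choose)
  else Sum.inl (midPt c d)

lemma outerOp_self (c : ZMod 3 × R) : outerOp P c c = Sum.inr c := if_pos rfl

lemma outerOp_of_joined {c d : ZMod 3 × R} (hcd : c ≠ d) {p : R} (h : Joined P c d p) :
    outerOp P c d = Sum.inr (-c.1 - d.1, c.2 + 2 * (rep (-c.1 - d.1) - rep c.1) * p) := by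
  have hex : ∃ p, Joined P c d p := ⟨p, h⟩
  rw [outerOp, if_neg hcd, dif_pos hex, hex.choose_spec.unique h hcd]

lemma outerOp_of_not_joined {c d : ZMod 3 × R} (h : ¬ ∃ p, Joined P c d p) :
    outerOp P c d = Sum.inl (midPt c d) := by
  have hcd : c ≠ d := by
    rintro rfl
    exact h ⟨0, joined_self P c⟩
  rw [outerOp, if_neg hcd, dif_neg h]

lemma outerOp_eq_inl_iff {b c d : ZMod 3 × R} :
    outerOp P c d = Sum.inl b ↔ (¬ ∃ p, Joined P c d p) ∧ midPt c d = b := by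
  by_cases h : ∃ p, Joined P c d p
  · rcases eq_or_ne c d with rfl | hcd
    · simp [outerOp_self, h]
    · obtain ⟨p, hp⟩ := h
      simp only [outerOp_of_joined hcd hp, reduceCtorEq, false_iff, not_and]
      exact fun h => absurd ⟨p, hp⟩ h
  · simp [outerOp_of_not_joined h, h]

lemma outerOp_comm (c d : ZMod 3 × R) : outerOp P c d = outerOp P d c := by
  rcases eq_or_ne c d with rfl | hcd
  · rfl
  by_cases h : ∃ p, Joined P c d p
  · obtain ⟨p, hp⟩ := h
    rw [outerOp_of_joined hcd hp, outerOp_of_joined hcd.symm hp.symm, neg_sub_comm, hp.2]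
    congr 2
    ring
  · have h' : ¬ ∃ p, Joined P d c p := fun ⟨p, hp⟩ => h ⟨p, hp.symm⟩
    rw [outerOp_of_not_joined h, outerOp_of_not_joined h', midPt_comm]

lemma outerOp_of_outerOp {c d d' : ZMod 3 × R} (h : outerOp P c d = Sum.inr d') :
    outerOp P c d' = Sum.inr d := by
  rcases eq_or_ne c d with rfl | hcd
  · rw [outerOp_self, Sum.inr.injEq] at h
    rw [← h, outerOp_self]
  by_cases hj : ∃ p, Joined P c d p
  · obtain ⟨p, hp⟩ := hj
    rw [outerOp_of_joined hcd hp, Sum.inr.injEq] at h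
    have hp' : Joined P c d' p := ⟨hp.1, by rw [← h]⟩
    have hne : c ≠ d' := fun h' =>
      zmod_three_ne_neg_sub (hp.fst_ne hcd) (by rw [← h] at h'; exact congrArg Prod.fst h')
    have hd : -c.1 - d'.1 = d.1 := by rw [← h, sub_sub_cancel]
    rw [outerOp_of_joined hne hp', hd, ← hp.2]
  · rw [outerOp_of_not_joined hj] at h
    exact absurd h Sum.inl_ne_inr

lemma mixedOp_eq_inl_iff (hP : 0 ∉ P) {b c : ZMod 3 × R} {x : Label P} :
    mixedOp e P b c = Sum.inl x ↔ labelMatching e x c = b := by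
  by_cases h : ∃ x : Label P, labelMatching e x c = b
  · rw [mixedOp, dif_pos h, Sum.inl.injEq]
    exact ⟨fun hx => hx ▸ h.choose_spec,
      fun hx => labelMatching_injective e hP c (h.choose_spec.trans hx.symm)⟩
  · rw [mixedOp, dif_neg h]
    exact ⟨fun hx => absurd hx Sum.inr_ne_inl, fun hx => absurd ⟨x, hx⟩ h⟩

lemma mixedOp_eq_inr_iff {b c d : ZMod 3 × R} :
    mixedOp e P b c = Sum.inr d ↔ outerOp P c d = Sum.inl b := by
  rw [outerOp_eq_inl_iff, ← exists_labelMatching_eq_midPt_iff e]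
  by_cases h : ∃ x : Label P, labelMatching e x c = b
  · rw [mixedOp, dif_pos h]
    exact ⟨fun h' => absurd h' Sum.inl_ne_inr, fun ⟨h', hb⟩ => absurd (hb ▸ h) h'⟩
  · rw [mixedOp, dif_neg h, Sum.inr.injEq, ← midPt_eq_iff]
    exact ⟨fun hb => ⟨by rwa [hb], hb⟩, And.right⟩

/-- The frame on two copies of `ℤ/3 × R` attached to a set `P` of nonzero elements of `R` and
a twist `e` of the special labels. -/
def labelFrame (hP : 0 ∉ P) : Frame (Label P) (ZMod 3 × R) (ZMod 3 × R) where
  inner := bose R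
  matching := labelMatching e
  mixed := mixedOp e P
  outer := outerOp P
  outer_self := outerOp_self
  outer_comm := outerOp_comm
  mixed_eq_inl _ _ _ := mixedOp_eq_inl_iff e hP
  mixed_eq_inr _ _ _ := mixedOp_eq_inr_iff e
  outer_of_outer _ _ _ := outerOp_of_outerOp

end Labels

/-! ### Large orders with a prescribed subsystem -/

section Embedding

/-- Some Steiner triple system on `x` points has a subsystem isomorphic to `W`. -/
def EmbedsInOrder (W : Squag γ) (x : ℕ) : Prop :=
  ∃ (s : Squag (Fin x)) (f : γ → Fin x), Function.Injective f ∧ IsHom W s f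

lemma embedsInOrder_of_isHom [Fintype β] {W : Squag γ} {s : Squag β} {f : γ → β}
    (hf : Function.Injective f) (hs : IsHom W s f) : EmbedsInOrder W (Fintype.card β) := by
  let e := Fintype.equivFin β
  exact ⟨s.map e, e ∘ f, e.injective.comp hf, (s.isHom_map e).comp hs⟩

lemma EmbedsInOrder.trans {W : Squag γ} {x y : ℕ} (h : EmbedsInOrder W x)
    (h' : ∀ s : Squag (Fin x), EmbedsInOrder s y) : EmbedsInOrder W y := by
  obtain ⟨s, f, hf, hs⟩ := h
  obtain ⟨s', f', hf', hs'⟩ := h' s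
  exact ⟨s', f' ∘ f, hf'.comp hf, hs'.comp hs⟩

/-- The Steiner quasigroup on no points. -/
def empty : Squag Empty := ⟨Empty.elim, nofun, nofun, nofun⟩

/-- The Steiner quasigroup on one point. -/
def point : Squag Unit := ⟨fun _ _ => (), fun _ => rfl, fun _ _ => rfl, fun _ _ => rfl⟩

/-- The Steiner quasigroup with a single triple. -/
def triangle : Squag (ZMod 3) := ⟨fun a b => -a - b, by decide, by decide, by decide⟩

lemma nonempty_of_card_eq_three [Fintype β] (h : Fintype.card β = 3) : Nonempty (Squag β) :=
  ⟨triangle.map (Fintype.equivOfCardEq h.symm)⟩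

lemma embedsInOrder_moore {X A : Type*} [Fintype X] [Fintype A] [AddCommGroup A] [Fintype α]
    (V : Squag α) {sX : Squag X} {Y : Squag (X ⊕ A)} (hY : IsHom sX Y Sum.inl) :
    EmbedsInOrder V (Fintype.card X + Fintype.card α * Fintype.card A) := by
  rw [← Fintype.card_prod, ← Fintype.card_sum]
  exact embedsInOrder_of_isHom (Sum.inr_injective.comp (Prod.mk_left_injective 0))
    (isHom_moore_zero V hY)

lemma embedsInOrder_double {x : ℕ} (s : Squag (Fin x)) : EmbedsInOrder s (2 * x + 1) := by
  obtain ⟨Y⟩ := nonempty_of_card_eq_three (β := Unit ⊕ ZMod 2) rfl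
  have hY : IsHom point Y Sum.inl := fun _ _ => (Y.op_self _).symm
  convert embedsInOrder_moore s hY using 1
  rw [Fintype.card_unit, Fintype.card_fin, ZMod.card]
  ring

lemma embedsInOrder_triple {x : ℕ} (s : Squag (Fin x)) : EmbedsInOrder s (3 * x) := by
  obtain ⟨Y⟩ := nonempty_of_card_eq_three (β := Empty ⊕ ZMod 3) rfl
  have hY : IsHom empty Y Sum.inl := nofun
  convert embedsInOrder_moore s hY using 1
  rw [Fintype.card_empty, Fintype.card_fin, ZMod.card]
  ring

lemma nonempty_invertible_two {m : ℕ} (hm : Odd m) : Nonempty (Invertible (2 : ZMod m)) :=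
  ((ZMod.isUnit_iff_coprime 2 m).2 (Nat.coprime_two_left.2 hm)).nonempty_invertible

lemma embedsInOrder_add_six_mul_of_le {b m : ℕ} (hb : Odd b) (hb3 : 3 ≤ b) (hm : Odd m)
    (hbm : b ≤ 2 * m + 1) (s : Squag (Fin b)) : EmbedsInOrder s (b + 6 * m) := by
  have : NeZero m := ⟨hm.pos.ne'⟩
  obtain ⟨_⟩ := nonempty_invertible_two hm
  obtain ⟨k, rfl⟩ := hb
  obtain ⟨P, hPsub, hPcard⟩ := exists_subset_card_eq (s := univ.erase (0 : ZMod m)) (n := k - 1)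
    (by rw [card_erase_of_mem (mem_univ _), card_univ, ZMod.card]; omega)
  have hP : 0 ∉ P := fun h => notMem_erase _ _ (hPsub h)
  have hcard : Fintype.card (Fin (2 * k + 1)) = Fintype.card (Label P) := by
    rw [card_label, hPcard, Fintype.card_fin]
    omega
  let e := Fintype.equivOfCardEq hcard
  have hF := (labelFrame (fun _ => 0) hP).isHom_extend_inl (s.map e)
  convert embedsInOrder_of_isHom (Sum.inl_injective.comp e.injective) (hF.comp (s.isHom_map e))
  rw [Fintype.card_sum, ← hcard, Fintype.card_sum, Fintype.card_prod, ZMod.card, ZMod.card,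
    Fintype.card_fin]
  ring

lemma EmbedsInOrder.add_six_mul {W : Squag γ} {b k : ℕ} (h : EmbedsInOrder W b) (hb : Odd b)
    (hb3 : 3 ≤ b) (hk : 5 * b ≤ k) : EmbedsInOrder W (b + 6 * k) := by
  rcases Nat.even_or_odd k with hk' | hk'
  · have h7 : EmbedsInOrder W (b + 6 * b) :=
      h.trans (embedsInOrder_add_six_mul_of_le hb hb3 hb (by omega))
    have hodd : Odd (b + 6 * b) := by
      obtain ⟨c, rfl⟩ := hb
      exact ⟨7 * c + 3, by ring⟩
    convert h7.trans (embedsInOrder_add_six_mul_of_le (m := k - b) hodd (by omega)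
      (Nat.Even.sub_odd (by omega) hk' hb) (by omega)) using 1
    omega
  · exact h.trans (embedsInOrder_add_six_mul_of_le hb hb3 hk' (by omega))

lemma exists_forall_embedsInOrder [Finite γ] (W : Squag γ) :
    ∃ N, ∀ x, N ≤ x → x % 6 = 1 ∨ x % 6 = 3 → EmbedsInOrder W x := by
  have := Fintype.ofFinite γ
  set w := Fintype.card γ
  have h₀ : EmbedsInOrder W w := embedsInOrder_of_isHom Function.injective_id fun _ _ => rfl
  have h₁ : EmbedsInOrder W (3 * (2 * w + 1)) :=
    (h₀.trans embedsInOrder_double).trans embedsInOrder_triple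
  have h₂ : EmbedsInOrder W (2 * (3 * (2 * w + 1)) + 1) := h₁.trans embedsInOrder_double
  refine ⟨31 * (2 * (3 * (2 * w + 1)) + 1), fun x hx hx6 => ?_⟩
  rcases hx6 with hx6 | hx6
  · convert h₂.add_six_mul (k := (x - (2 * (3 * (2 * w + 1)) + 1)) / 6) ⟨_, rfl⟩ (by omega)
      (by omega) using 1
    omega
  · convert h₁.add_six_mul (k := (x - 3 * (2 * w + 1)) / 6) ⟨3 * w + 1, by ring⟩ (by omega)
      (by omega) using 1
    omega

end Embedding

lemma card_dvd_of_add_sub_mem {A : Type*} [AddCommGroup A] [Fintype A] {S : Finset A}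
    (hne : S.Nonempty) (hS : ∀ a ∈ S, ∀ b ∈ S, ∀ c ∈ S, b + (a - c) ∈ S) :
    #S ∣ Fintype.card A := by
  obtain ⟨s, hs⟩ := hne
  let H : AddSubgroup A :=
    { carrier := {r | s + r ∈ S}
      zero_mem' := by simpa using hs
      add_mem' := fun {a b} ha hb => by
        simpa [add_assoc, add_comm b] using hS _ ha _ hb s hs
      neg_mem' := fun {a} ha => by
        simpa [sub_eq_add_neg] using hS _ hs _ hs _ ha }
  have hcard : Nat.card H = #S := by
    rw [← Nat.card_eq_finsetCard]
    exact Nat.card_congr ((Equiv.addLeft s).subtypeEquiv fun _ => Iff.rfl)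
  rw [← hcard, ← Nat.card_eq_fintype_card]
  exact H.card_addSubgroup_dvd_card

/-! ### Orders of subsystems -/

section Fibres

/-- The fibre over `i` of a set of points of `ι × κ`, as a set of points of `κ`. -/
def fibre {ι κ : Type*} (T : Finset (ι × κ)) (i : ι) : Finset κ :=
  T.preimage (Prod.mk i) (Prod.mk_right_injective i).injOn

@[simp] lemma mem_fibre {ι κ : Type*} {T : Finset (ι × κ)} {i : ι} {a : κ} :
    a ∈ fibre T i ↔ (i, a) ∈ T := mem_preimage

lemma card_eq_sum_card_fibre {ι κ : Type*} [Fintype ι] (T : Finset (ι × κ)) :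
    #T = ∑ i, #(fibre T i) := by
  rw [card_eq_sum_card_fiberwise (f := Prod.fst) (t := univ) fun _ _ => mem_univ _]
  refine sum_congr rfl fun i _ => ?_
  rw [fibre, card_preimage]
  congr 2
  ext ⟨j, a⟩
  simp [eq_comm]

variable {R : Type*} [CommRing R] [Invertible (2 : R)] {T : Finset (ZMod 3 × R)}

lemma half_mem_fibre (hT : (bose R).IsClosed T) {i : ZMod 3} {a b : R} (ha : a ∈ fibre T i)
    (hb : b ∈ fibre T i) (hab : a ≠ b) : ⅟2 * (a + b) ∈ fibre T (i + 1) := by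
  rw [mem_fibre] at *
  rw [← boseOp_same i hab]
  exact hT _ ha _ hb

lemma reflect_mem_fibre (hT : (bose R).IsClosed T) {i : ZMod 3} {a b : R} (ha : a ∈ fibre T i)
    (hb : b ∈ fibre T (i + 1)) (hab : a ≠ b) : 2 * b - a ∈ fibre T i := by
  rw [mem_fibre] at *
  rw [← boseOp_up i hab]
  exact hT _ ha _ hb

lemma level_mem_fibre (hT : (bose R).IsClosed T) {i j : ZMod 3} {a : R} (ha : a ∈ fibre T i)
    (hb : a ∈ fibre T j) (hij : i ≠ j) : a ∈ fibre T (-i - j) := by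
  rw [mem_fibre] at *
  rw [← boseOp_level hij]
  exact hT _ ha _ hb

lemma card_erase_fibre (hT : (bose R).IsClosed T) {i : ZMod 3} {a : R} (ha : a ∈ fibre T i) :
    #((fibre T i).erase a) = #((fibre T (i + 1)).erase a) := by
  have half : (2 : R) * ⅟2 = 1 := mul_invOf_self 2
  refine card_nbij' (fun b => ⅟2 * (a + b)) (fun c => 2 * c - a) ?_ ?_ ?_ ?_
  · intro b hb
    obtain ⟨hba, hb⟩ := mem_erase.1 hb
    refine mem_coe.2 (mem_erase.2 ⟨fun h => hba ?_, half_mem_fibre hT ha hb hba.symm⟩)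
    linear_combination 2 * h - (a + b) * half
  · intro c hc
    obtain ⟨hca, hc⟩ := mem_erase.1 hc
    refine mem_coe.2 (mem_erase.2 ⟨fun h => hca ?_, reflect_mem_fibre hT ha hc hca.symm⟩)
    linear_combination ⅟2 * h - (c - a) * half
  · intro b _
    linear_combination (a + b) * half
  · intro c _
    linear_combination c * half

lemma card_fibre_of_mem (hT : (bose R).IsClosed T) {i : ZMod 3} {a : R} (ha : a ∈ fibre T i)
    (ha' : a ∈ fibre T (i + 1)) : #(fibre T i) = #(fibre T (i + 1)) := by
  rw [← card_erase_add_one ha, card_erase_fibre hT ha, card_erase_add_one ha']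

lemma card_fibre_of_notMem (hT : (bose R).IsClosed T) {i : ZMod 3} {a : R} (ha : a ∈ fibre T i)
    (ha' : a ∉ fibre T (i + 1)) : #(fibre T i) = #(fibre T (i + 1)) + 1 := by
  rw [← card_erase_add_one ha, card_erase_fibre hT ha, erase_eq_of_notMem ha']

lemma card_fibre_eq_zero_or (hT : (bose R).IsClosed T) (i : ZMod 3) :
    #(fibre T i) = 0 ∨ #(fibre T i) = #(fibre T (i + 1)) ∨
      #(fibre T i) = #(fibre T (i + 1)) + 1 := by
  rcases (fibre T i).eq_empty_or_nonempty with he | ⟨a, ha⟩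
  · exact .inl (card_eq_zero.2 he)
  · by_cases ha' : a ∈ fibre T (i + 1)
    · exact .inr (.inl (card_fibre_of_mem hT ha ha'))
    · exact .inr (.inr (card_fibre_of_notMem hT ha ha'))

lemma card_fibre_le_two (hT : (bose R).IsClosed T) {i : ZMod 3}
    (hi : ¬ fibre T i ⊆ fibre T (i + 1)) (j : ZMod 3) : #(fibre T j) ≤ 2 := by
  have h3 : (3 : ZMod 3) = 0 := rfl
  obtain ⟨a, ha, ha'⟩ := not_subset.1 hi
  have hcard := card_fibre_of_notMem hT ha ha'
  have hdisj : ∀ b ∈ fibre T i, b ∉ fibre T (i + 1) := fun b hb hb' => by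
    have := card_fibre_of_mem hT hb hb'
    omega
  have hnext : #(fibre T (i + 1)) = 0 ∨ #(fibre T (i + 1)) = #(fibre T (i + 1 + 1)) + 1 := by
    rcases (fibre T (i + 1)).eq_empty_or_nonempty with he | ⟨c, hc⟩
    · exact .inl (card_eq_zero.2 he)
    refine .inr (card_fibre_of_notMem hT hc fun hc' => ?_)
    have hlevel := level_mem_fibre hT hc hc' (by simp)
    rw [show -(i + 1) - (i + 1 + 1) = i by linear_combination -(i + 1) * h3] at hlevel
    exact hdisj c hlevel hc
  have hlast := card_fibre_eq_zero_or hT (i + 1 + 1)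
  rw [show i + 1 + 1 + 1 = i by linear_combination h3] at hlast
  rcases zmod_three_eq_or_eq_add_one i j with rfl | rfl | hij
  · omega
  · omega
  · rw [show j = i + 1 + 1 by linear_combination -hij - h3]
    omega

lemma card_fibre_le_two_or_eq (hT : (bose R).IsClosed T) :
    (∀ i, #(fibre T i) ≤ 2) ∨ ∀ i, fibre T i = fibre T 0 := by
  by_cases h : ∀ i, fibre T i ⊆ fibre T (i + 1)
  · have h0 : fibre T 0 ⊆ fibre T 1 := h 0
    have h1 : fibre T 1 ⊆ fibre T 2 := h 1
    have h2 : fibre T 2 ⊆ fibre T 0 := h 2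
    refine .inr fun i => ?_
    rcases zmod_three_eq i with rfl | rfl | rfl
    · rfl
    · exact (h1.trans h2).antisymm h0
    · exact h2.antisymm (h0.trans h1)
  · push Not at h
    obtain ⟨i, hi⟩ := h
    exact .inl (card_fibre_le_two hT hi)

lemma card_fibre_dvd [Fintype R] (hT : (bose R).IsClosed T) (hne : (fibre T 0).Nonempty)
    (heq : ∀ i, fibre T i = fibre T 0) : #(fibre T 0) ∣ Fintype.card R := by
  have half : (2 : R) * ⅟2 = 1 := mul_invOf_self 2
  have half_mem : ∀ a ∈ fibre T 0, ∀ b ∈ fibre T 0, ⅟2 * (a + b) ∈ fibre T 0 := by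
    intro a ha b hb
    rcases eq_or_ne a b with rfl | hab
    · rwa [show ⅟2 * (a + a) = a by linear_combination a * half]
    · rw [← heq (0 + 1)]
      exact half_mem_fibre hT ha hb hab
  have reflect_mem : ∀ a ∈ fibre T 0, ∀ b ∈ fibre T 0, 2 * b - a ∈ fibre T 0 := by
    intro a ha b hb
    rcases eq_or_ne a b with rfl | hab
    · rwa [show 2 * a - a = a by ring]
    · exact reflect_mem_fibre hT ha (by rwa [heq]) hab
  refine card_dvd_of_add_sub_mem hne fun a ha b hb c hc => ?_
  have := reflect_mem c hc _ (half_mem a ha b hb)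
  rwa [show 2 * (⅟2 * (a + b)) - c = b + (a - c) by linear_combination (a + b) * half] at this

lemma eq_univ_or_card_le_of_isClosed_bose [Fintype R] (hT : (bose R).IsClosed T) :
    T = univ ∨ #T ≤ 6 ∨ ∃ k, k ∣ Fintype.card R ∧ k < Fintype.card R ∧ #T = 3 * k := by
  rw [card_eq_sum_card_fibre]
  rcases card_fibre_le_two_or_eq hT with h | h
  · exact .inr (.inl (sum_le_card_nsmul univ _ 2 fun i _ => h i))
  have hsum : ∑ i, #(fibre T i) = 3 * #(fibre T 0) := by
    simp only [h, sum_const, card_univ, ZMod.card, smul_eq_mul]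
  rcases (fibre T 0).eq_empty_or_nonempty with he | hne
  · rw [hsum, he]
    exact .inr (.inl (by simp))
  rcases (card_le_univ (fibre T 0)).lt_or_eq with hlt | heq
  · exact .inr (.inr ⟨_, card_fibre_dvd hT hne h, hlt, hsum⟩)
  · refine .inl (eq_univ_of_forall fun ⟨i, b⟩ => mem_fibre.1 ?_)
    rw [h, (card_eq_iff_eq_univ _).1 heq]
    exact mem_univ b

end Fibres

section LabelExtension

variable {R : Type*} [CommRing R] [Invertible (2 : R)] {P : Finset R}
  (e : R → ZMod 3) (hP : 0 ∉ P) (sX : Squag (Label P))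

/-- The Steiner quasigroup on the labels and two copies of `ℤ/3 × R`. -/
def labelExtension : Squag (Label P ⊕ ((ZMod 3 × R) ⊕ (ZMod 3 × R))) :=
  (labelFrame e hP).extend sX

lemma isHom_labelExtension_inl : IsHom sX (labelExtension e hP sX) Sum.inl :=
  (labelFrame e hP).isHom_extend_inl sX

variable {e hP sX} {S : Finset (Label P ⊕ ((ZMod 3 × R) ⊕ (ZMod 3 × R)))}

lemma isClosed_toLeft_toRight (hS : (labelExtension e hP sX).IsClosed S) :
    (bose R).IsClosed S.toRight.toLeft := by
  intro a ha b hb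
  rw [mem_toLeft, mem_toRight] at *
  exact hS _ ha _ hb

lemma card_fibre_toRight_le (hS : (labelExtension e hP sX).IsClosed S) (i : ZMod 3) :
    #(fibre S.toRight.toRight i) ≤ #(fibre S.toRight.toLeft i) + 1 := by
  rcases (fibre S.toRight.toRight i).eq_empty_or_nonempty with he | ⟨γ, hγ⟩
  · simp [he]
  rw [← card_erase_add_one hγ, Nat.add_le_add_iff_right]
  refine card_le_card_of_injOn (fun δ => ⅟2 * (γ + δ)) (fun δ hδ => ?_) ?_
  · have h3 : (3 : ZMod 3) = 0 := rfl
    obtain ⟨hne, hδ⟩ := mem_erase.1 hδ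
    have hcd : ((i, γ) : ZMod 3 × R) ≠ (i, δ) := fun h => hne (congrArg Prod.snd h).symm
    rw [mem_coe, mem_fibre, mem_toLeft, mem_toRight]
    rw [mem_fibre, mem_toRight, mem_toRight] at hγ hδ
    have hmem : Sum.inr (outerOp P (i, γ) (i, δ)) ∈ S := hS _ hγ _ hδ
    rwa [outerOp_of_not_joined fun ⟨p, hp⟩ => hp.fst_ne hcd rfl, midPt,
      show -i - i = i by linear_combination -i * h3] at hmem
  · intro δ _ δ' _ h
    have half : (2 : R) * ⅟2 = 1 := mul_invOf_self 2
    linear_combination 2 * h - (δ - δ') * half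

lemma card_toRight_le (hS : (labelExtension e hP sX).IsClosed S) :
    #S.toRight ≤ 2 * #S.toRight.toLeft + 3 := by
  have hle : #S.toRight.toRight ≤ #S.toRight.toLeft + 3 := by
    rw [card_eq_sum_card_fibre, card_eq_sum_card_fibre S.toRight.toLeft]
    calc ∑ i, #(fibre S.toRight.toRight i) ≤ ∑ i, (#(fibre S.toRight.toLeft i) + 1) :=
          sum_le_sum fun i _ => card_fibre_toRight_le hS i
      _ = ∑ i, #(fibre S.toRight.toLeft i) + 3 := by
          rw [sum_add_distrib, sum_const, card_univ, ZMod.card, smul_eq_mul, mul_one]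
  rw [← card_toLeft_add_card_toRight (u := S.toRight)]
  omega

lemma forall_mem_or_card_toRight_le [Fintype R] (hS : (labelExtension e hP sX).IsClosed S) :
    (∀ b, Sum.inr (Sum.inl b) ∈ S) ∨ #S.toRight ≤ 15 ∨
      ∃ k, k ∣ Fintype.card R ∧ k < Fintype.card R ∧ #S.toRight ≤ 6 * k + 3 := by
  have hle := card_toRight_le hS
  rcases eq_univ_or_card_le_of_isClosed_bose (isClosed_toLeft_toRight hS) with
    h | h | ⟨k, hk, hlt, h⟩
  · exact .inl fun b => mem_toRight.1 (mem_toLeft.1 (h ▸ mem_univ b))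
  · exact .inr (.inl (by omega))
  · exact .inr (.inr ⟨k, hk, hlt, by omega⟩)

end LabelExtension

section Subsystems

variable {X A D : Type*}

lemma exists_op_inl_inr {sX : Squag X} {s : Squag (X ⊕ D)} (hs : IsHom sX s Sum.inl) (x : X)
    (q : D) : ∃ q', s.op (Sum.inl x) (Sum.inr q) = Sum.inr q' := by
  rcases h : s.op (Sum.inl x) (Sum.inr q) with y | q'
  · have := s.op_op (Sum.inl x) (Sum.inr q)
    rw [h, ← hs] at this
    exact absurd this Sum.inl_ne_inr
  · exact ⟨q', rfl⟩

lemma card_toLeft_le_card_toRight {sX : Squag X} {s : Squag (X ⊕ D)} (hs : IsHom sX s Sum.inl)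
    {S : Finset (X ⊕ D)} (hS : s.IsClosed S) {q : D} (hq : Sum.inr q ∈ S) :
    #S.toLeft ≤ #S.toRight := by
  choose f hf using fun x => exists_op_inl_inr hs x q
  refine card_le_card_of_injOn f (fun x hx => ?_) fun x _ y _ hxy => ?_
  · rw [mem_coe, mem_toLeft] at hx
    rw [mem_coe, mem_toRight, ← hf]
    exact hS _ hx _ hq
  · refine Sum.inl_injective (s.op_left_injective (Sum.inr q) ?_)
    rw [s.op_comm, hf, s.op_comm, hf, hxy]

lemma toRight_preimage_mooreIncl (S : Finset (X ⊕ α × A)) (v : α) :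
    (S.preimage (mooreIncl v) (mooreIncl_injective v).injOn).toRight = fibre S.toRight v := by
  ext a
  simp

variable [AddCommGroup A] {V : Squag α} {sX : Squag X} {Y : Squag (X ⊕ A)}
  {hY : IsHom sX Y Sum.inl} {S : Finset (X ⊕ α × A)} {v w : α}

lemma neg_sub_mem_fibre (hS : (moore V hY).IsClosed S) (hvw : v ≠ w) {a b : A}
    (ha : a ∈ fibre S.toRight v) (hb : b ∈ fibre S.toRight w) :
    -a - b ∈ fibre S.toRight (V.op v w) := by
  rw [mem_fibre, mem_toRight] at *
  rw [← moore_of_ne V hY hvw]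
  exact hS _ ha _ hb

lemma card_fibre_op (hS : (moore V hY).IsClosed S) (hvw : v ≠ w)
    (hv : (fibre S.toRight v).Nonempty) :
    #(fibre S.toRight (V.op v w)) = #(fibre S.toRight w) := by
  obtain ⟨a, ha⟩ := hv
  refine card_nbij' (fun b => -a - b) (fun b => -a - b) (fun b hb => ?_)
    (fun b hb => neg_sub_mem_fibre hS hvw ha hb) (fun b _ => sub_sub_cancel _ _)
    fun b _ => sub_sub_cancel _ _
  have := neg_sub_mem_fibre hS (V.op_ne_left hvw).symm ha hb
  rwa [V.op_op] at this

lemma card_fibre_eq (hS : (moore V hY).IsClosed S) (hv : (fibre S.toRight v).Nonempty)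
    (hw : (fibre S.toRight w).Nonempty) : #(fibre S.toRight v) = #(fibre S.toRight w) := by
  rcases eq_or_ne v w with rfl | hvw
  · rfl
  · rw [← card_fibre_op hS hvw hv, V.op_comm, card_fibre_op hS hvw.symm hw]

lemma card_fibre_dvd_of_ne [Fintype A] (hS : (moore V hY).IsClosed S) (hvw : v ≠ w)
    (hv : (fibre S.toRight v).Nonempty) (hw : (fibre S.toRight w).Nonempty) :
    #(fibre S.toRight v) ∣ Fintype.card A := by
  obtain ⟨d, hd⟩ := hw
  refine card_dvd_of_add_sub_mem hv fun a ha b hb c hc => ?_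
  -- Travel around the copies over `w`, `V.op v w` and back to `v`, adding `a - c` on the way.
  have had := neg_sub_mem_fibre hS hvw ha hd
  have hcad := neg_sub_mem_fibre hS (V.op_ne_left hvw).symm hc had
  rw [V.op_op] at hcad
  have hbcad := neg_sub_mem_fibre hS hvw hb hcad
  have := neg_sub_mem_fibre hS (V.op_ne_right hvw).symm hd hbcad
  rw [V.op_right_op] at this
  convert this using 1
  abel

lemma toRight_fst_eq_or_card_dvd [Fintype α] [Fintype A] (hS : (moore V hY).IsClosed S) :
    (∀ p ∈ S.toRight, ∀ q ∈ S.toRight, p.1 = q.1) ∨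
      ∃ k, k ∣ Fintype.card A ∧ 3 * k ≤ #S.toRight ∧ #S.toRight ≤ Fintype.card α * k := by
  refine or_iff_not_imp_left.2 fun h => ?_
  push Not at h
  obtain ⟨⟨v, a⟩, ha, ⟨w, b⟩, hb, hvw : v ≠ w⟩ := h
  have hv : (fibre S.toRight v).Nonempty := ⟨a, mem_fibre.2 ha⟩
  have hw : (fibre S.toRight w).Nonempty := ⟨b, mem_fibre.2 hb⟩
  refine ⟨#(fibre S.toRight v), card_fibre_dvd_of_ne hS hvw hv hw, ?_, ?_⟩
  · have hmem : v ∉ ({w, V.op v w} : Finset α) := by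
      simpa using ⟨hvw, (V.op_ne_left hvw).symm⟩
    rw [card_eq_sum_card_fibre]
    calc 3 * #(fibre S.toRight v) = ∑ i ∈ {v, w, V.op v w}, #(fibre S.toRight i) := by
          rw [sum_insert hmem, sum_pair (V.op_ne_right hvw).symm, card_fibre_op hS hvw hv,
            card_fibre_eq hS hw hv]
          ring
      _ ≤ ∑ i, #(fibre S.toRight i) := sum_le_sum_of_subset (subset_univ _)
  · rw [card_eq_sum_card_fibre, ← smul_eq_mul, ← card_univ]
    refine sum_le_card_nsmul _ _ _ fun i _ => ?_
    rcases (fibre S.toRight i).eq_empty_or_nonempty with he | hne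
    · simp [he]
    · exact (card_fibre_eq hS hne hv).le

lemma isClosed_preimage_mooreIncl (hS : (moore V hY).IsClosed S) (v : α) :
    Y.IsClosed (S.preimage (mooreIncl v) (mooreIncl_injective v).injOn) := by
  intro p hp q hq
  rw [mem_preimage] at *
  rw [← moore_mooreIncl V hY]
  exact hS _ hp _ hq

end Subsystems

section Recognition

variable {R : Type*} [CommRing R] [Invertible (2 : R)] [Fintype R] {P : Finset R}
  {e : R → ZMod 3} {hP : 0 ∉ P} {sX : Squag (Label P)}
  {V : Squag α} [AddCommGroup ((ZMod 3 × R) ⊕ (ZMod 3 × R))]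
  {S : Finset (Label P ⊕ α × ((ZMod 3 × R) ⊕ (ZMod 3 × R)))}

lemma card_fibre_toRight_ge_or_le (hS : (moore V (isHom_labelExtension_inl e hP sX)).IsClosed S)
    (v : α) :
    3 * Fintype.card R ≤ #(fibre S.toRight v) ∨ #(fibre S.toRight v) ≤ 15 ∨
      ∃ k, k ∣ Fintype.card R ∧ k < Fintype.card R ∧ #(fibre S.toRight v) ≤ 6 * k + 3 := by
  have h := forall_mem_or_card_toRight_le (isClosed_preimage_mooreIncl hS v)
  rw [toRight_preimage_mooreIncl] at h
  refine h.imp_left fun h => ?_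
  have hmem (b : ZMod 3 × R) : Sum.inl b ∈ fibre S.toRight v := by
    rw [← toRight_preimage_mooreIncl, mem_toRight]
    exact h b
  calc 3 * Fintype.card R = #(univ : Finset (ZMod 3 × R)) := by
        rw [card_univ, Fintype.card_prod, ZMod.card]
    _ ≤ #(fibre S.toRight v) := card_le_card_of_injOn Sum.inl (fun b _ => hmem b)
        Sum.inl_injective.injOn

lemma inr_notMem_of_card_eq [Fintype α]
    (hS : (moore V (isHom_labelExtension_inl e hP sX)).IsClosed S)
    (hcard : #S = Fintype.card (Label P)) (hR : 60 < Fintype.card R)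
    (hlt : Fintype.card (Label P) < 3 * Fintype.card R)
    (hge : Fintype.card R ≤ 2 * Fintype.card (Label P))
    (hdvd : ∀ k, k ∣ 6 * Fintype.card R → Fintype.card R ≤ k ∨
      288 * Fintype.card α * k ≤ 6 * Fintype.card R)
    (q : α × ((ZMod 3 × R) ⊕ (ZMod 3 × R))) : Sum.inr q ∉ S := by
  intro hq
  have hle := card_toLeft_le_card_toRight (isHom_moore_inl V (isHom_labelExtension_inl e hP sX))
    hS hq
  rw [← card_toLeft_add_card_toRight] at hcard
  rcases toRight_fst_eq_or_card_dvd hS with h | ⟨k, hk, hk3, hkα⟩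
  · have hsum : #S.toRight = #(fibre S.toRight q.1) := by
      rw [card_eq_sum_card_fibre]
      refine sum_eq_single_of_mem _ (mem_univ _) fun w _ hw => card_eq_zero.2 ?_
      exact eq_empty_of_forall_notMem fun b hb => hw (h _ (mem_fibre.1 hb) q (mem_toRight.2 hq))
    rcases card_fibre_toRight_ge_or_le hS q.1 with h | h | ⟨k, hk, hkR, h⟩
    · omega
    · omega
    · have hα : 0 < Fintype.card α := Fintype.card_pos_iff.2 ⟨q.1⟩
      have : 288 * k ≤ 288 * Fintype.card α * k :=
        Nat.mul_le_mul_right k (Nat.le_mul_of_pos_right _ hα)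
      have := hdvd k (hk.mul_left 6)
      omega
  · rw [Fintype.card_sum, Fintype.card_prod, ZMod.card] at hk
    have := hdvd k (by convert hk using 1; ring)
    rw [mul_assoc] at this
    omega

end Recognition

/-! ### Rigidity -/

section Cyclic

variable {R : Type*} [CommRing R] {P : Finset R} {e : R → ZMod 3}

/-- The matchings attached to `x`, `y` and `z` differ by a common permutation. This property of
the triple of special labels is preserved by automorphisms and singles it out. -/
def Cyclic (e : R → ZMod 3) (x y z : Label P) : Prop :=
  ∃ τ : ZMod 3 × R → ZMod 3 × R, ∀ c,
    labelMatching e x (τ c) = labelMatching e y c ∧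
      labelMatching e y (τ c) = labelMatching e z c ∧
        labelMatching e z (τ c) = labelMatching e x c

lemma Cyclic.rotate {x y z : Label P} (h : Cyclic e x y z) : Cyclic e y z x := by
  obtain ⟨τ, hτ⟩ := h
  exact ⟨τ, fun c => ⟨(hτ c).2.1, (hτ c).2.2, (hτ c).1⟩⟩

lemma Cyclic.map {x y z : Label P} (h : Cyclic e x y z) {gX : Label P → Label P}
    {gB gC : ZMod 3 × R → ZMod 3 × R} (hC : Function.Surjective gC)
    (hmatch : ∀ x c, gB (labelMatching e x c) = labelMatching e (gX x) (gC c)) :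
    Cyclic e (gX x) (gX y) (gX z) := by
  obtain ⟨τ, hτ⟩ := h
  refine ⟨fun c => gC (τ (Function.surjInv hC c)), fun c => ?_⟩
  obtain ⟨hxy, hyz, hzx⟩ := hτ (Function.surjInv hC c)
  rw [← hmatch, ← hmatch, ← hmatch, hxy, hyz, hzx, hmatch, hmatch, hmatch,
    Function.surjInv_eq hC c]
  exact ⟨rfl, rfl, rfl⟩

lemma cyclic_special : Cyclic (P := P) e (Sum.inl 0) (Sum.inl 1) (Sum.inl 2) := by
  refine ⟨fun c => (c.1 + 1, c.2), fun ⟨i, γ⟩ => ?_⟩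
  have h3 : (3 : ZMod 3) = 0 := rfl
  simp only [labelMatching_inl, Prod.mk.injEq, and_true]
  exact ⟨by ring, by ring, by linear_combination h3⟩

lemma not_cyclic_inr_inl_inr (he : ∃ γ δ, e γ ≠ e δ) (a b : {s : ZMod 3 // s ≠ 0} × P)
    (s : ZMod 3) : ¬ Cyclic e (Sum.inr a) (Sum.inl s) (Sum.inr b) := by
  rintro ⟨τ, hτ⟩
  obtain ⟨u, p⟩ := a
  obtain ⟨w, q⟩ := b
  have hconst : ∀ γ, e γ = u - w + u - s := by
    intro γ
    obtain ⟨h1, -, h3⟩ := hτ (0, γ)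
    generalize τ (0, γ) = c at h1 h3
    obtain ⟨i, γ'⟩ := c
    simp only [labelMatching_inl, labelMatching_inr, Prod.mk.injEq] at h1 h3
    linear_combination h3.1 - h1.1
  obtain ⟨γ, δ, h⟩ := he
  exact h ((hconst γ).trans (hconst δ).symm)

variable [Invertible (2 : R)]

lemma not_cyclic_inr_inl_inl (hP : 0 ∉ P) (a : {s : ZMod 3 // s ≠ 0} × P) (s s' : ZMod 3) :
    ¬ Cyclic e (Sum.inr a) (Sum.inl s) (Sum.inl s') := by
  rintro ⟨τ, hτ⟩
  obtain ⟨u, p⟩ := a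
  obtain ⟨-, h2, h3⟩ := hτ (0, 0)
  generalize τ (0, 0) = c at h2 h3
  obtain ⟨i, γ⟩ := c
  simp only [labelMatching_inl, labelMatching_inr, Prod.mk.injEq] at h2 h3
  have hp : (p : R) = 0 := eq_zero_of_rep_sub_mul (i := 0 - u) (j := 0) (by simpa using u.2)
    (by linear_combination h2.2 - h3.2)
  exact hP (hp ▸ p.2)

lemma Cyclic.eq_of_inr (hthree : ∀ r : R, 3 * r = 0 → r = 0)
    {a b c : {s : ZMod 3 // s ≠ 0} × P} (h : Cyclic e (Sum.inr a) (Sum.inr b) (Sum.inr c)) :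
    a = b := by
  obtain ⟨τ, hτ⟩ := h
  obtain ⟨⟨u, hu⟩, p⟩ := a
  obtain ⟨⟨v, hv⟩, q⟩ := b
  obtain ⟨⟨w, hw⟩, r⟩ := c
  obtain ⟨h1, h2, h3⟩ := hτ (0, 0)
  generalize τ (0, 0) = d at h1 h2 h3
  obtain ⟨i, γ⟩ := d
  simp only [labelMatching_inr, Prod.mk.injEq] at h1 h2 h3
  have hlevel : ∀ u v w i : ZMod 3, u ≠ 0 → v ≠ 0 → w ≠ 0 →
      i + u = 0 + v → i + v = 0 + w → i + w = 0 + u → u = v ∧ v = w ∧ i = 0 := by decide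
  obtain ⟨rfl, rfl, rfl⟩ := hlevel u v w i hu hv hw h1.1 h2.1 h3.1
  have hpq : (p : R) - q = 0 := eq_zero_of_rep_sub_mul (i := 0 - u) (j := 0) (by simpa using hu)
    (hthree _ (by linear_combination 2 * h1.2 - h2.2 - h3.2))
  rw [Subtype.ext (sub_eq_zero.1 hpq)]

lemma Cyclic.exists_eq_inl (hP : 0 ∉ P) (hthree : ∀ r : R, 3 * r = 0 → r = 0)
    (he : ∃ γ δ, e γ ≠ e δ) {x y z : Label P} (h : Cyclic e x y z) (hxy : x ≠ y) :
    ∃ s, x = Sum.inl s := by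
  rcases x with s | a
  · exact ⟨s, rfl⟩
  rcases y with s | b <;> rcases z with s' | c
  · exact absurd h (not_cyclic_inr_inl_inl hP a s s')
  · exact absurd h (not_cyclic_inr_inl_inr he a c s)
  · exact absurd h.rotate (not_cyclic_inr_inl_inr he b a s')
  · exact absurd (congrArg _ (h.eq_of_inr hthree)) hxy

end Cyclic

section Rigid

variable {R : Type*} [CommRing R]

/-- The indicator function of `{0, 1}`, used to twist the special matchings. -/
def twist (r : R) : ZMod 3 := if r = 0 ∨ r = 1 then 1 else 0

lemma twist_eq_one_iff {r : R} : twist r = 1 ↔ r = 0 ∨ r = 1 := by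
  rw [twist]
  split_ifs with h <;> simp [h]

lemma twist_eq_zero_or_one (r : R) : twist r = 0 ∨ twist r = 1 := by
  rw [twist]
  split_ifs <;> simp

/-- Conditions on `R` and on the set of parameters `P` under which no nontrivial automorphism of
the twisted extension of the labels preserves the labels. -/
structure Rigid (P : Finset R) : Prop where
  zero_notMem : 0 ∉ P
  one_mem : 1 ∈ P
  neg_one_notMem : -1 ∉ P
  eq_zero_of_three_mul : ∀ r : R, 3 * r = 0 → r = 0
  closure_one : AddSubmonoid.closure {(1 : R)} = ⊤

variable {P : Finset R}

lemma Rigid.one_ne_zero (H : Rigid P) : (1 : R) ≠ 0 := fun h => H.zero_notMem (h ▸ H.one_mem)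

lemma Rigid.neg_one_ne_zero (H : Rigid P) : (-1 : R) ≠ 0 := neg_ne_zero.2 H.one_ne_zero

lemma Rigid.neg_one_ne_one (H : Rigid P) : (-1 : R) ≠ 1 := fun h =>
  H.neg_one_notMem (h.symm ▸ H.one_mem)

lemma Rigid.twist_neg_one (H : Rigid P) : twist (-1 : R) = 0 :=
  (twist_eq_zero_or_one _).resolve_right fun h =>
    (twist_eq_one_iff.1 h).elim H.neg_one_ne_zero H.neg_one_ne_one

lemma Rigid.exists_third (H : Rigid P) (a b : R) : ∃ c, c ≠ a ∧ c ≠ b := by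
  by_contra! hcon
  have h01 := H.one_ne_zero
  have h02 := H.neg_one_ne_zero
  have h12 := H.neg_one_ne_one
  rcases eq_or_ne 0 a with rfl | h0
  · exact h12 ((hcon _ h02).trans (hcon _ h01).symm)
  · rcases eq_or_ne 1 a with rfl | h1
    · exact h02 ((hcon _ h12).trans (hcon _ h0).symm)
    · exact h01 ((hcon _ h1).trans (hcon _ h0).symm)

variable {gX : Label P → Label P} {gB gC : ZMod 3 × R → ZMod 3 × R} {f : R → R}

lemma Rigid.exists_map_inl_eq [Invertible (2 : R)] (H : Rigid P) (hX : Function.Injective gX)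
    (hC : Function.Surjective gC)
    (hmatch : ∀ x c, gB (labelMatching twist x c) = labelMatching twist (gX x) (gC c))
    (s : ZMod 3) : ∃ s', gX (Sum.inl s) = Sum.inl s' := by
  have hcyc := cyclic_special.map hC hmatch
  have he : ∃ γ δ : R, twist γ ≠ twist δ :=
    ⟨0, -1, by rw [twist_eq_one_iff.2 (.inl rfl), H.twist_neg_one]; decide⟩
  have hne {i j : ZMod 3} (h : i ≠ j) : gX (Sum.inl i) ≠ gX (Sum.inl j) :=
    hX.ne (Sum.inl_injective.ne h)
  rcases zmod_three_eq s with rfl | rfl | rfl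
  · exact hcyc.exists_eq_inl H.zero_notMem H.eq_zero_of_three_mul he (hne (by decide))
  · exact hcyc.rotate.exists_eq_inl H.zero_notMem H.eq_zero_of_three_mul he (hne (by decide))
  · exact hcyc.rotate.rotate.exists_eq_inl H.zero_notMem H.eq_zero_of_three_mul he
      (hne (by decide))

lemma exists_coordinate [Finite R] (hB : Function.Injective gB) {e : R → ZMod 3}
    (hmatch : ∀ x c, gB (labelMatching e x c) = labelMatching e (gX x) (gC c))
    (hspecial : ∀ s, ∃ s', gX (Sum.inl s) = Sum.inl s') :
    ∃ f : R → R, Function.Injective f ∧ (∀ i γ, (gB (i, γ)).2 = f γ) ∧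
      ∀ i γ, (gC (i, γ)).2 = f γ := by
  have hBC (i j : ZMod 3) (γ : R) : (gB (j, γ)).2 = (gC (i, γ)).2 := by
    obtain ⟨s', hs'⟩ := hspecial (j - i - e γ)
    have h := congrArg Prod.snd (hmatch (Sum.inl (j - i - e γ)) (i, γ))
    rwa [hs', labelMatching_inl, show i + (j - i - e γ) + e γ = j by ring] at h
  refine ⟨fun γ => (gC (0, γ)).2, Finite.injective_iff_surjective.2 fun δ => ?_, hBC 0,
    fun i γ => (hBC i 0 γ).symm.trans (hBC 0 0 γ)⟩
  obtain ⟨⟨j, γ⟩, h⟩ := Finite.injective_iff_surjective.1 hB (0, δ)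
  exact ⟨γ, by simp only [← hBC 0 j γ, h]⟩

lemma Rigid.map_eq_zero_or_one (H : Rigid P) {r : ZMod 3}
    (hB : ∀ i γ, gB (i, γ) = (i + r, f γ)) (hC : ∀ i γ, gC (i, γ) = (i + r, f γ))
    (hmatch : ∀ x c, gB (labelMatching twist x c) = labelMatching twist (gX x) (gC c))
    (hspecial : ∃ s', gX (Sum.inl 0) = Sum.inl s') {γ : R} (hγ : γ = 0 ∨ γ = 1) :
    f γ = 0 ∨ f γ = 1 := by
  obtain ⟨s, hs⟩ := hspecial
  have htwist (γ : R) : s + twist (f γ) = twist γ := by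
    have h := hmatch (Sum.inl 0) (0, γ)
    rw [hs, hC, labelMatching_inl, hB, labelMatching_inl] at h
    linear_combination -(congrArg Prod.fst h)
  have hγ1 := htwist γ
  have hneg := htwist (-1)
  rw [twist_eq_one_iff.2 hγ] at hγ1
  rw [H.twist_neg_one] at hneg
  have hs0 : ∀ s a b : ZMod 3, (a = 0 ∨ a = 1) → (b = 0 ∨ b = 1) → s + a = 1 → s + b = 0 →
      s = 0 := by decide
  rw [hs0 s _ _ (twist_eq_zero_or_one _) (twist_eq_zero_or_one _) hγ1 hneg, zero_add] at hγ1
  exact twist_eq_one_iff.1 hγ1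

lemma Rigid.exists_map_add (H : Rigid P) (hf : Function.Injective f) {r : ZMod 3}
    {e : R → ZMod 3} (hB : ∀ i γ, gB (i, γ) = (i + r, f γ))
    (hC : ∀ i γ, gC (i, γ) = (i + r, f γ))
    (hmatch : ∀ x c, gB (labelMatching e x c) = labelMatching e (gX x) (gC c)) :
    ∃ p ∈ P, ∀ i γ,
      f (γ + (rep (i - 2) - rep i)) = f γ + (rep (i + r - 2) - rep (i + r)) * p := by
  rcases hx : gX (Sum.inr (⟨2, by decide⟩, ⟨1, H.one_mem⟩)) with s | ⟨⟨s, hs⟩, p, hp⟩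
  · have h := hmatch (Sum.inr (⟨2, by decide⟩, ⟨1, H.one_mem⟩)) (0, 0)
    rw [hx, hC, labelMatching_inl, labelMatching_inr, hB] at h
    have h := hf (congrArg Prod.snd h)
    rw [show (0 - 2 : ZMod 3) = 1 from rfl, rep_one, rep_zero] at h
    exact absurd (by linear_combination h) H.one_ne_zero
  · refine ⟨p, hp, fun i γ => ?_⟩
    have h := hmatch (Sum.inr (⟨2, by decide⟩, ⟨1, H.one_mem⟩)) (i, γ)
    rw [hx, hC, labelMatching_inr, labelMatching_inr, hB] at h
    obtain ⟨h1, h2⟩ := Prod.mk.injEq .. ▸ h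
    obtain rfl : s = 2 := by linear_combination -h1
    rwa [mul_one] at h2

lemma Rigid.shift_eq_zero (H : Rigid P) {r : ZMod 3} {p : R} (hp : p ∈ P)
    (hadd : ∀ i γ, f (γ + (rep (i - 2) - rep i)) =
      f γ + (rep (i + r - 2) - rep (i + r)) * p) : r = 0 := by
  have hp0 : 3 * p ≠ 0 := fun h => H.zero_notMem (H.eq_zero_of_three_mul p h ▸ hp)
  have hstep : (rep (0 - 2) - rep 0 : R) = rep (1 - 2) - rep 1 := by
    rw [show (0 - 2 : ZMod 3) = 1 from rfl, show (1 - 2 : ZMod 3) = 2 from rfl, rep_zero, rep_one,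
      rep_two]
    ring
  have h0 := hadd 0 0
  have h1 := hadd 1 0
  rw [hstep, h1] at h0
  rcases zmod_three_eq r with rfl | rfl | rfl
  · rfl
  · rw [show (1 + 1 - 2 : ZMod 3) = 0 from rfl, show (1 + 1 : ZMod 3) = 2 from rfl,
      show (0 + 1 - 2 : ZMod 3) = 2 from rfl, zero_add, rep_zero, rep_one, rep_two] at h0
    exact absurd (by linear_combination -h0) hp0
  · rw [show (1 + 2 - 2 : ZMod 3) = 1 from rfl, show (1 + 2 : ZMod 3) = 0 from rfl,
      show (0 + 2 - 2 : ZMod 3) = 0 from rfl, zero_add, rep_zero, rep_one, rep_two] at h0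
    exact absurd (by linear_combination h0) hp0

lemma Rigid.coordinate_eq (H : Rigid P) (hf : Function.Injective f) {p : R} (hp : p ∈ P)
    (hadd : ∀ γ, f (γ + 1) = f γ + p) (h0 : f 0 = 0 ∨ f 0 = 1) (h1 : f 1 = 0 ∨ f 1 = 1) (γ : R) :
    f γ = γ := by
  have hp01 : f 1 = f 0 + p := by simpa using hadd 0
  obtain ⟨h0, h1⟩ : f 0 = 0 ∧ f 1 = 1 := by
    have hne := hf.ne H.one_ne_zero
    rcases h0 with h0 | h0 <;> rcases h1 with h1 | h1
    · exact absurd (h1.trans h0.symm) hne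
    · exact ⟨h0, h1⟩
    · exact absurd hp (by
        rw [show p = -1 by linear_combination h1 - h0 - hp01]
        exact H.neg_one_notMem)
    · exact absurd (h1.trans h0.symm) hne
  have hp1 : p = 1 := by linear_combination h1 - h0 - hp01
  induction γ using AddSubmonoid.induction_of_closure_eq_top_right H.closure_one with
  | zero => exact h0
  | add_right γ s hs ih => rw [Set.mem_singleton_iff.1 hs, hadd, ih, hp1]

end Rigid

section Coordinates

variable {R : Type*} [CommRing R] {P : Finset R} {gX : Label P → Label P}
  {gB gC : ZMod 3 × R → ZMod 3 × R} {f : R → R}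

lemma Rigid.fst_map_outer (H : Rigid P) {r : ZMod 3}
    (hmid : ∀ i γ δ, γ ≠ δ → i + r = -(gC (i, γ)).1 - (gC (i, δ)).1) (i : ZMod 3) (γ : R) :
    (gC (i, γ)).1 = i + r := by
  obtain ⟨δ, hδ, -⟩ := H.exists_third γ γ
  obtain ⟨ε, hεγ, hεδ⟩ := H.exists_third γ δ
  have h3 : (3 : ZMod 3) = 0 := rfl
  linear_combination hmid i ε δ hεδ - hmid i δ γ hδ - hmid i ε γ hεγ + (gC (i, γ)).1 * h3

variable [Invertible (2 : R)]

lemma map_midPt (hB : ∀ i γ, (gB (i, γ)).2 = f γ) (hC : ∀ i γ, (gC (i, γ)).2 = f γ)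
    (houter : ∀ c d, Sum.map gB gC (outerOp P c d) = outerOp P (gC c) (gC d))
    (i : ZMod 3) {γ δ : R} (h : γ ≠ δ) :
    f (⅟2 * (γ + δ)) = ⅟2 * (f γ + f δ) ∧
      (gB (i, ⅟2 * (γ + δ))).1 = -(gC (i, γ)).1 - (gC (i, δ)).1 := by
  have h3 : (3 : ZMod 3) = 0 := rfl
  have hcd : (i, γ) ≠ (i, δ) := fun h' => h (congrArg Prod.snd h')
  have hk := houter (i, γ) (i, δ)
  rw [outerOp_of_not_joined fun ⟨p, hp⟩ => hp.fst_ne hcd rfl] at hk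
  have hmid := (outerOp_eq_inl_iff.1 hk.symm).2
  simp only [midPt, hC, show -i - i = i by linear_combination -i * h3] at hmid
  rw [← hB i, ← hmid]
  exact ⟨rfl, rfl⟩

lemma Rigid.fst_map_eq (H : Rigid P) (hf : Function.Injective f)
    (hB : ∀ i γ, (gB (i, γ)).2 = f γ)
    (hmid : ∀ γ δ, γ ≠ δ → f (⅟2 * (γ + δ)) = ⅟2 * (f γ + f δ))
    (hinner : IsHom (bose R) (bose R) gB) (i : ZMod 3) {γ δ : R} (h : γ ≠ δ) :
    (gB (i, γ)).1 = (gB (i, δ)).1 ∧ (gB (i + 1, ⅟2 * (γ + δ))).1 = (gB (i, γ)).1 + 1 := by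
  have hmul : boseOp (gB (i, γ)) (gB (i, δ)) = gB (i + 1, ⅟2 * (γ + δ)) := by
    rw [← boseOp_same i h]
    exact (hinner _ _).symm
  have hne := hf.ne h
  have hsnd : (boseOp (gB (i, γ)) (gB (i, δ))).2 = ⅟2 * (f γ + f δ) := by
    rw [hmul, hB, hmid _ _ h]
  have hthree (a b : R) (hab : 2 * b - a = ⅟2 * (a + b)) : a = b :=
    (sub_eq_zero.1 (H.eq_zero_of_three_mul (b - a)
      (by linear_combination 2 * hab + (a + b) * mul_invOf_self (2 : R)))).symm
  rw [← hmul]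
  rw [← Prod.mk.eta (p := gB (i, γ)), ← Prod.mk.eta (p := gB (i, δ)), hB, hB] at hsnd ⊢
  generalize (gB (i, γ)).1 = j at hsnd ⊢
  generalize (gB (i, δ)).1 = k at hsnd ⊢
  rcases zmod_three_eq_or_eq_add_one j k with rfl | rfl | rfl
  · exact ⟨rfl, by rw [boseOp_same _ hne]⟩
  · rw [boseOp_up _ hne] at hsnd
    exact absurd (hthree _ _ hsnd) hne
  · rw [boseOp_down _ hne, add_comm (f γ)] at hsnd
    exact absurd (hthree _ _ hsnd) hne.symm

lemma Rigid.fst_map_inner (H : Rigid P) (hf : Function.Injective f)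
    (hB : ∀ i γ, (gB (i, γ)).2 = f γ)
    (hmid : ∀ γ δ, γ ≠ δ → f (⅟2 * (γ + δ)) = ⅟2 * (f γ + f δ))
    (hinner : IsHom (bose R) (bose R) gB) (i : ZMod 3) (γ : R) :
    (gB (i, γ)).1 = i + (gB (0, 0)).1 := by
  have hconst (i : ZMod 3) (γ : R) : (gB (i, γ)).1 = (gB (i, 0)).1 := by
    rcases eq_or_ne γ 0 with rfl | h
    · rfl
    · exact (H.fst_map_eq hf hB hmid hinner i h).1
  have hsucc (i : ZMod 3) : (gB (i + 1, 0)).1 = (gB (i, 0)).1 + 1 := by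
    rw [← hconst (i + 1) (⅟2 * (0 + 1)),
      (H.fst_map_eq hf hB hmid hinner i H.one_ne_zero.symm).2]
  rw [hconst]
  have h1 : (gB (1, 0)).1 = (gB (0, 0)).1 + 1 := hsucc 0
  have h2 : (gB (2, 0)).1 = (gB (1, 0)).1 + 1 := hsucc 1
  rcases zmod_three_eq i with rfl | rfl | rfl
  · rw [zero_add]
  · rw [h1, add_comm]
  · rw [h2, h1]
    ring

lemma Rigid.exists_shift (H : Rigid P) (hf : Function.Injective f)
    (hB : ∀ i γ, (gB (i, γ)).2 = f γ) (hC : ∀ i γ, (gC (i, γ)).2 = f γ)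
    (hinner : IsHom (bose R) (bose R) gB)
    (houter : ∀ c d, Sum.map gB gC (outerOp P c d) = outerOp P (gC c) (gC d)) :
    ∃ r, (∀ i γ, gB (i, γ) = (i + r, f γ)) ∧ ∀ i γ, gC (i, γ) = (i + r, f γ) := by
  have hfst := H.fst_map_inner hf hB (fun γ δ h => (map_midPt hB hC houter 0 h).1) hinner
  refine ⟨_, fun i γ => Prod.ext (hfst i γ) (hB i γ),
    fun i γ => Prod.ext (H.fst_map_outer (fun i γ δ h => ?_) i γ) (hC i γ)⟩
  rw [← hfst, (map_midPt hB hC houter i h).2]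

lemma Rigid.eq_id [Finite R] (H : Rigid P) {sX : Squag (Label P)} (hX : Function.Injective gX)
    (hB : Function.Injective gB) (hC : Function.Injective gC)
    (hg : IsHom (labelExtension twist H.zero_notMem sX) (labelExtension twist H.zero_notMem sX)
      (Sum.map gX (Sum.map gB gC))) :
    gX = id ∧ gB = id ∧ gC = id := by
  have hmatch (x c) : gB (labelMatching twist x c) = labelMatching twist (gX x) (gC c) :=
    Sum.inl_injective (Sum.inr_injective (hg (Sum.inl x) (Sum.inr (Sum.inr c))))
  have hinner : IsHom (bose R) (bose R) gB := fun a b =>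
    Sum.inl_injective (Sum.inr_injective (hg (Sum.inr (Sum.inl a)) (Sum.inr (Sum.inl b))))
  have houter (c d) : Sum.map gB gC (outerOp P c d) = outerOp P (gC c) (gC d) :=
    Sum.inr_injective (hg (Sum.inr (Sum.inr c)) (Sum.inr (Sum.inr d)))
  have hspecial := H.exists_map_inl_eq hX (Finite.surjective_of_injective hC) hmatch
  obtain ⟨f, hf, hfB, hfC⟩ := exists_coordinate hB hmatch hspecial
  obtain ⟨r, hrB, hrC⟩ := H.exists_shift hf hfB hfC hinner houter
  obtain ⟨p, hp, hadd⟩ := H.exists_map_add hf hrB hrC hmatch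
  obtain rfl := H.shift_eq_zero hp hadd
  have hid : ∀ γ, f γ = γ := H.coordinate_eq hf hp
    (fun γ => by
      have h := hadd 0 γ
      rwa [add_zero, show (0 - 2 : ZMod 3) = 1 from rfl, rep_one, rep_zero, sub_zero,
        one_mul] at h)
    (H.map_eq_zero_or_one hrB hrC hmatch (hspecial 0) (.inl rfl))
    (H.map_eq_zero_or_one hrB hrC hmatch (hspecial 0) (.inr rfl))
  have hB' (b) : gB b = b := by rw [← Prod.mk.eta (p := b), hrB, hid, add_zero]
  have hC' (c) : gC c = c := by rw [← Prod.mk.eta (p := c), hrC, hid, add_zero]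
  refine ⟨funext fun x => labelMatching_injective twist H.zero_notMem (0, 0) ?_, funext hB',
    funext hC'⟩
  have h := hmatch x (0, 0)
  rw [hB', hC'] at h
  exact h.symm

end Coordinates

/-! ### Automorphisms -/

lemma exists_eq_sum_map {X D : Type*} [Finite X] {g : X ⊕ D → X ⊕ D} (hg : Function.Injective g)
    (h : ∀ x, ∃ x', g (Sum.inl x) = Sum.inl x') : ∃ gX gD, g = Sum.map gX gD := by
  choose gX hgX using h
  have hinj : Function.Injective gX := fun x y hxy =>
    Sum.inl_injective (hg (by rw [hgX, hgX, hxy]))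
  have hD (d : D) : ∃ d', g (Sum.inr d) = Sum.inr d' := by
    rcases hd : g (Sum.inr d) with x | d'
    · obtain ⟨y, rfl⟩ := Finite.surjective_of_injective hinj x
      exact absurd (hg (hd.trans (hgX y).symm)) Sum.inr_ne_inl
    · exact ⟨d', rfl⟩
  choose gD hgD using hD
  exact ⟨gX, gD, funext fun p => p.casesOn hgX hgD⟩

lemma IsHom.isClosed_image_univ [Fintype α] [DecidableEq β] {s : Squag α} {t : Squag β} {f : α → β}
    (hf : IsHom s t f) : t.IsClosed (univ.image f) := by
  intro a ha b hb
  obtain ⟨a, -, rfl⟩ := mem_image.1 ha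
  obtain ⟨b, -, rfl⟩ := mem_image.1 hb
  rw [← hf]
  exact mem_image_of_mem _ (mem_univ _)

section MooreAutomorphisms

variable {X A : Type*} [AddCommGroup A] {V : Squag α} {sX : Squag X} {Y : Squag (X ⊕ A)}
  {hY : IsHom sX Y Sum.inl}

lemma isHom_moore_map {h : α → α} (hh : IsHom V V h) (hinj : Function.Injective h) :
    IsHom (moore V hY) (moore V hY) (Sum.map id (Prod.map h id)) := by
  have hincl (v) (p : X ⊕ A) :
      Sum.map id (Prod.map h id) (mooreIncl v p) = mooreIncl (h v) p := by
    rcases p with x | a <;> rfl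
  intro p q
  rcases exists_eq_mooreIncl_or p q with
    ⟨x, y, rfl, rfl⟩ | ⟨v, p, q, rfl, rfl⟩ | ⟨v, w, a, b, hvw, rfl, rfl⟩
  · rfl
  · rw [moore_mooreIncl, hincl, hincl, hincl, moore_mooreIncl]
  · rw [moore_of_ne V hY hvw]
    simp only [Sum.map_inr, Prod.map_apply, id_eq]
    rw [moore_of_ne V hY (hinj.ne hvw), hh]

lemma isHom_of_isHom_moore_map {h : α → α}
    (hg : IsHom (moore V hY) (moore V hY) (Sum.map id (Prod.map h id))) : IsHom V V h := by
  intro v w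
  have hvw := (hg.comp (isHom_moore_zero V hY)) v w
  exact congrArg Prod.fst (Sum.inr_injective (hvw.trans (isHom_moore_zero V hY (h v) (h w)).symm))

lemma isHom_of_comp_mooreIncl {g : X ⊕ α × A → X ⊕ α × A}
    (hg : IsHom (moore V hY) (moore V hY) g) {v w : α} {f : X ⊕ A → X ⊕ A}
    (hf : ∀ p, g (mooreIncl v p) = mooreIncl w (f p)) : IsHom Y Y f := by
  intro p q
  apply mooreIncl_injective w
  rw [← hf, ← moore_mooreIncl V hY, hg, hf, hf, moore_mooreIncl]

lemma fst_map_eq_of_op_inl {gX : X → X} {gA : α × A → α × A}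
    (hg : IsHom (moore V hY) (moore V hY) (Sum.map gX gA)) (v : α) {x : X} {a a' : A}
    (h : Y.op (Sum.inl x) (Sum.inr a) = Sum.inr a') : (gA (v, a')).1 = (gA (v, a)).1 := by
  have hgxa : (moore V hY).op (Sum.inl (gX x)) (Sum.inr (gA (v, a))) = Sum.inr (gA (v, a')) := by
    have hxa := moore_mooreIncl V hY v (Sum.inl x) (Sum.inr a)
    rw [h] at hxa
    exact ((congrArg (Sum.map gX gA) hxa).symm.trans (hg _ _)).symm
  have hincl := (moore_mooreIncl V hY (gA (v, a)).1 (Sum.inl (gX x))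
    (Sum.inr (gA (v, a)).2)).symm.trans hgxa
  rcases hxa : Y.op (Sum.inl (gX x)) (Sum.inr (gA (v, a)).2) with y | b <;> rw [hxa] at hincl
  · exact absurd hincl Sum.inl_ne_inr
  · exact (congrArg Prod.fst (Sum.inr_injective hincl)).symm

end MooreAutomorphisms

section Extension

variable {R : Type*} [CommRing R] {P : Finset R}

lemma eq_of_forall_labelMatching_eq {e : R → ZMod 3} (hP : 1 ∈ P)
    (hclosure : AddSubmonoid.closure {(1 : R)} = ⊤) {F : (ZMod 3 × R) ⊕ (ZMod 3 × R) → β}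
    (hF : ∀ (x : Label P) c, F (Sum.inl (labelMatching e x c)) = F (Sum.inr c))
    (a b : (ZMod 3 × R) ⊕ (ZMod 3 × R)) : F a = F b := by
  have hlevel (i j : ZMod 3) (γ : R) : F (Sum.inl (j, γ)) = F (Sum.inr (i, γ)) := by
    rw [← hF (Sum.inl (j - i - e γ)) (i, γ), labelMatching_inl]
    congr 3
    ring
  have hstep (γ : R) : F (Sum.inl (0, γ + 1)) = F (Sum.inl (0, γ)) := by
    rw [hlevel 0 0 γ, ← hF (Sum.inr (⟨2, by decide⟩, ⟨1, hP⟩)) (0, γ), labelMatching_inr,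
      show (0 - 2 : ZMod 3) = 1 from rfl, rep_one, rep_zero, sub_zero, mul_one, hlevel 0 0,
      ← hlevel 0 (0 + 2)]
  have hzero (γ : R) : F (Sum.inl (0, γ)) = F (Sum.inl (0, 0)) := by
    induction γ using AddSubmonoid.induction_of_closure_eq_top_right hclosure with
    | zero => rfl
    | add_right γ s hs ih => rw [Set.mem_singleton_iff.1 hs, hstep, ih]
  have hall : ∀ a, F a = F (Sum.inl (0, 0)) := by
    rintro (⟨i, γ⟩ | ⟨i, γ⟩)
    · rw [hlevel 0 i, ← hlevel 0 0, hzero]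
    · rw [← hlevel i 0, hzero]
  rw [hall a, hall b]

variable [Invertible (2 : R)] [Fintype R]

lemma exists_eq_sum_map_of_isHom_labelExtension {e : R → ZMod 3} {hP : 0 ∉ P}
    {sX : Squag (Label P)} (hR : 5 < Fintype.card R)
    (hdvd : ∀ k, k ∣ Fintype.card R → k < Fintype.card R → 3 * k ≤ Fintype.card R)
    {gX : Label P → Label P} {gA : (ZMod 3 × R) ⊕ (ZMod 3 × R) → (ZMod 3 × R) ⊕ (ZMod 3 × R)}
    (hg : IsHom (labelExtension e hP sX) (labelExtension e hP sX) (Sum.map gX gA))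
    (hA : Function.Injective gA) : ∃ gB gC, gA = Sum.map gB gC := by
  have hclosed : (labelExtension e hP sX).IsClosed
      (univ.image (Sum.map gX gA ∘ Sum.inr ∘ Sum.inl)) :=
    (hg.comp (s := bose R) (f := Sum.inr ∘ Sum.inl) fun _ _ => rfl).isClosed_image_univ
  have hright : (univ.image (Sum.map gX gA ∘ Sum.inr ∘ Sum.inl)).toRight =
      univ.image (gA ∘ Sum.inl) := by
    ext a
    simp
  have hcard : #(univ.image (gA ∘ Sum.inl)) = 3 * Fintype.card R := by
    rw [card_image_of_injective _ (hA.comp Sum.inl_injective), card_univ, Fintype.card_prod,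
      ZMod.card]
  have hmem (b) : Sum.inl b ∈ univ.image (gA ∘ Sum.inl) := by
    rw [← hright, mem_toRight]
    rcases forall_mem_or_card_toRight_le hclosed with h | h | ⟨k, hk, hlt, h⟩
    · exact h b
    · rw [hright] at h
      omega
    · rw [hright] at h
      have := hdvd k hk hlt
      omega
  have himage : univ.image Sum.inl = univ.image (gA ∘ Sum.inl) := by
    refine eq_of_subset_of_card_le (image_subset_iff.2 fun b _ => hmem b) (le_of_eq ?_)
    rw [hcard, card_image_of_injective _ Sum.inl_injective, card_univ, Fintype.card_prod,
      ZMod.card]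
  refine exists_eq_sum_map hA fun b => ?_
  have hb : gA (Sum.inl b) ∈ univ.image Sum.inl :=
    himage ▸ mem_image_of_mem (gA ∘ Sum.inl) (mem_univ b)
  obtain ⟨b', -, h⟩ := mem_image.1 hb
  exact ⟨b', h.symm⟩

lemma Rigid.eq_id_of_isHom (H : Rigid P) {sX : Squag (Label P)} (hR : 5 < Fintype.card R)
    (hdvd : ∀ k, k ∣ Fintype.card R → k < Fintype.card R → 3 * k ≤ Fintype.card R)
    {gX : Label P → Label P} {gA : (ZMod 3 × R) ⊕ (ZMod 3 × R) → (ZMod 3 × R) ⊕ (ZMod 3 × R)}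
    (hg : IsHom (labelExtension twist H.zero_notMem sX) (labelExtension twist H.zero_notMem sX)
      (Sum.map gX gA)) (hinj : Function.Injective (Sum.map gX gA)) : gX = id ∧ gA = id := by
  obtain ⟨hX, hA⟩ := Sum.map_injective.1 hinj
  obtain ⟨gB, gC, rfl⟩ := exists_eq_sum_map_of_isHom_labelExtension hR hdvd hg hA
  obtain ⟨hB, hC⟩ := Sum.map_injective.1 hA
  obtain ⟨rfl, rfl, rfl⟩ := H.eq_id hX hB hC hg
  exact ⟨rfl, Sum.map_id_id⟩

variable [Fintype α] {V : Squag α} [AddCommGroup ((ZMod 3 × R) ⊕ (ZMod 3 × R))]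

lemma exists_eq_sum_map_of_isHom_moore {e : R → ZMod 3} {hP : 0 ∉ P} {sX : Squag (Label P)}
    (hR : 60 < Fintype.card R) (hlt : Fintype.card (Label P) < 3 * Fintype.card R)
    (hge : Fintype.card R ≤ 2 * Fintype.card (Label P))
    (hdvd : ∀ k, k ∣ 6 * Fintype.card R → Fintype.card R ≤ k ∨
      288 * Fintype.card α * k ≤ 6 * Fintype.card R)
    {g : Label P ⊕ α × ((ZMod 3 × R) ⊕ (ZMod 3 × R)) →
      Label P ⊕ α × ((ZMod 3 × R) ⊕ (ZMod 3 × R))}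
    (hg : IsHom (moore V (isHom_labelExtension_inl e hP sX))
      (moore V (isHom_labelExtension_inl e hP sX)) g)
    (hinj : Function.Injective g) : ∃ gX gA, g = Sum.map gX gA := by
  refine exists_eq_sum_map hinj fun x => ?_
  rcases hx : g (Sum.inl x) with y | q
  · exact ⟨y, rfl⟩
  · have hq := inr_notMem_of_card_eq
      (hg.comp (isHom_moore_inl V (isHom_labelExtension_inl e hP sX))).isClosed_image_univ
      (card_image_of_injective _ (hinj.comp Sum.inl_injective)) hR hlt hge hdvd q
    exact absurd (mem_image.2 ⟨x, mem_univ _, hx⟩) hq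

lemma Rigid.exists_eq_map [Nonempty α] (H : Rigid P) {sX : Squag (Label P)}
    (hR : 60 < Fintype.card R) (hlt : Fintype.card (Label P) < 3 * Fintype.card R)
    (hge : Fintype.card R ≤ 2 * Fintype.card (Label P))
    (hdvd : ∀ k, k ∣ 6 * Fintype.card R → Fintype.card R ≤ k ∨
      288 * Fintype.card α * k ≤ 6 * Fintype.card R)
    {g : Label P ⊕ α × ((ZMod 3 × R) ⊕ (ZMod 3 × R)) →
      Label P ⊕ α × ((ZMod 3 × R) ⊕ (ZMod 3 × R))}
    (hg : IsHom (moore V (isHom_labelExtension_inl twist H.zero_notMem sX))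
      (moore V (isHom_labelExtension_inl twist H.zero_notMem sX)) g)
    (hinj : Function.Injective g) :
    ∃ h : α → α, IsHom V V h ∧ Function.Injective h ∧ g = Sum.map id (Prod.map h id) := by
  obtain ⟨gX, gA, rfl⟩ := exists_eq_sum_map_of_isHom_moore hR hlt hge hdvd hg hinj
  have hfst (v a) : (gA (v, a)).1 = (gA (v, 0)).1 :=
    eq_of_forall_labelMatching_eq (F := fun a => (gA (v, a)).1) H.one_mem H.closure_one
      (fun x c => fst_map_eq_of_op_inl hg v (x := x) rfl) a 0
  have hincl (v p) : Sum.map gX gA (mooreIncl v p) =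
      mooreIncl (gA (v, 0)).1 (Sum.map gX (fun a => (gA (v, a)).2) p) := by
    rcases p with x | a
    · rfl
    · exact congrArg Sum.inr (Prod.ext (hfst v a) rfl)
  have hdvd' (k) (hk : k ∣ Fintype.card R) (hlt : k < Fintype.card R) :
      3 * k ≤ Fintype.card R := by
    have : 288 * k ≤ 288 * Fintype.card α * k :=
      Nat.mul_le_mul_right k (Nat.le_mul_of_pos_right _ Fintype.card_pos)
    have := hdvd k (hk.mul_left 6)
    omega
  have hid (v) : gX = id ∧ (fun a => (gA (v, a)).2) = id := by
    refine H.eq_id_of_isHom (by omega) hdvd' (isHom_of_comp_mooreIncl hg (hincl v)) ?_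
    refine Function.Injective.of_comp (f := mooreIncl (gA (v, 0)).1) ?_
    have hcomp : mooreIncl (gA (v, 0)).1 ∘ Sum.map gX (fun a => (gA (v, a)).2) =
        Sum.map gX gA ∘ mooreIncl v := funext fun p => (hincl v p).symm
    rw [hcomp]
    exact hinj.comp (mooreIncl_injective v)
  obtain rfl := (hid (Classical.arbitrary α)).1
  have hgA : gA = Prod.map (fun v => (gA (v, 0)).1) id :=
    funext fun ⟨v, a⟩ => Prod.ext (hfst v a) (congrFun (hid v).2 a)
  rw [hgA] at hg hinj ⊢
  have hh := (Sum.map_injective.1 hinj).2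
  refine ⟨_, isHom_of_isHom_moore_map hg, fun v w hvw => ?_, rfl⟩
  have hzero : Prod.map (fun v => (gA (v, 0)).1) id (v, (0 : (ZMod 3 × R) ⊕ (ZMod 3 × R))) =
      Prod.map (fun v => (gA (v, 0)).1) id (w, 0) := Prod.ext hvw rfl
  exact congrArg Prod.fst (hh hzero)

end Extension

/-- The embedding `φ` of `V` in `U` prescribes the automorphisms of `U`: they restrict to
automorphisms of `V`, and every automorphism of `V` is the restriction of exactly one of them.
This is `FullEmbedding` in terms of quasigroups, see `PrescribesAut.fullEmbedding`. -/
structure PrescribesAut (V : Squag α) (U : Squag β) (φ : α → β) : Prop where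
  isHom : IsHom V U φ
  injective : Function.Injective φ
  exists_restrict : ∀ g : Equiv.Perm β, IsHom U U g →
    ∃ h : Equiv.Perm α, IsHom V V h ∧ ∀ a, g (φ a) = φ (h a)
  existsUnique_extend : ∀ h : Equiv.Perm α, IsHom V V h →
    ∃! g : Equiv.Perm β, IsHom U U g ∧ ∀ a, g (φ a) = φ (h a)

lemma PrescribesAut.map {V : Squag α} {U : Squag β} {φ : α → β} (hφ : PrescribesAut V U φ)
    (e : β ≃ γ) : PrescribesAut V (U.map e) (e ∘ φ) where
  isHom := (U.isHom_map e).comp hφ.isHom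
  injective := e.injective.comp hφ.injective
  exists_restrict g hg := by
    obtain ⟨h, hh, hgh⟩ := hφ.exists_restrict (e.trans (g.trans e.symm))
      ((U.isHom_map e).symm.comp (hg.comp (U.isHom_map e)))
    exact ⟨h, hh, fun a => e.symm.injective ((hgh a).trans (e.symm_apply_apply _).symm)⟩
  existsUnique_extend h hh := by
    obtain ⟨g, ⟨hg, hgφ⟩, huniq⟩ := hφ.existsUnique_extend h hh
    refine ⟨e.symm.trans (g.trans e),
      ⟨(U.isHom_map e).comp (hg.comp (U.isHom_map e).symm), fun a => by simp [hgφ]⟩, ?_⟩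
    rintro k ⟨hk, hkφ⟩
    have hkg : e.trans (k.trans e.symm) = g :=
      huniq _ ⟨(U.isHom_map e).symm.comp (hk.comp (U.isHom_map e)), fun a =>
        (congrArg e.symm (hkφ a)).trans (e.symm_apply_apply _)⟩
    ext x
    simp [← hkg]

lemma PrescribesAut.fullEmbedding [Fintype α] [Fintype β] {V : Squag α} {U : Squag β}
    {φ : α → β} (hφ : PrescribesAut V U φ) : FullEmbedding V.triples U.triples φ := by
  refine ⟨isCopy_of_isHom hφ.isHom hφ.injective, fun g hg => ?_, fun g hg => ?_, fun h hh => ?_⟩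
  · obtain ⟨h, -, hgφ⟩ := hφ.exists_restrict g ((U.isAut_triples_iff g).1 hg)
    have hcomp : g ∘ φ = φ ∘ h := funext hgφ
    rw [image_image, hcomp, ← image_image, image_univ_equiv]
  · simpa only [isAut_triples_iff] using hφ.exists_restrict g ((U.isAut_triples_iff g).1 hg)
  · simpa only [isAut_triples_iff] using hφ.existsUnique_extend h ((V.isAut_triples_iff h).1 hh)

lemma PrescribesAut.fullEmbedding_of_isEmpty [Fintype α] [IsEmpty α] [Fintype β] {U : Squag β}
    {φ : Unit → β} (hφ : PrescribesAut point U φ) (V : Squag α) :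
    FullEmbedding V.triples U.triples isEmptyElim := by
  refine PrescribesAut.fullEmbedding ⟨isEmptyElim, fun a => isEmptyElim a,
    fun g _ => ⟨1, fun _ _ => rfl, isEmptyElim⟩, fun h _ =>
      ⟨1, ⟨fun _ _ => rfl, isEmptyElim⟩, fun g hg => ?_⟩⟩
  obtain ⟨h, -, hgφ⟩ := hφ.exists_restrict g hg.1
  exact (hφ.existsUnique_extend 1 fun _ _ => rfl).unique ⟨hg.1, hgφ⟩ ⟨fun _ _ => rfl, fun _ => rfl⟩

lemma Rigid.prescribesAut_moore {R : Type*} [CommRing R] [Invertible (2 : R)] [Fintype R]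
    {P : Finset R} [Fintype α] [Nonempty α] [AddCommGroup ((ZMod 3 × R) ⊕ (ZMod 3 × R))]
    (H : Rigid P) (V : Squag α) (sX : Squag (Label P)) (hR : 60 < Fintype.card R)
    (hlt : Fintype.card (Label P) < 3 * Fintype.card R)
    (hge : Fintype.card R ≤ 2 * Fintype.card (Label P))
    (hdvd : ∀ k, k ∣ 6 * Fintype.card R → Fintype.card R ≤ k ∨
      288 * Fintype.card α * k ≤ 6 * Fintype.card R) :
    PrescribesAut V (moore V (isHom_labelExtension_inl twist H.zero_notMem sX))
      fun v => Sum.inr (v, 0) where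
  isHom := isHom_moore_zero V _
  injective _ _ h := congrArg Prod.fst (Sum.inr_injective h)
  exists_restrict g hg := by
    obtain ⟨h, hh, hinj, hgh⟩ := H.exists_eq_map hR hlt hge hdvd hg g.injective
    exact ⟨Equiv.ofBijective h (Finite.injective_iff_bijective.1 hinj), hh,
      fun v => congrFun hgh (Sum.inr (v, 0))⟩
  existsUnique_extend h hh := by
    refine ⟨(Equiv.refl _).sumCongr (h.prodCongr (Equiv.refl _)),
      ⟨isHom_moore_map hh h.injective, fun v => rfl⟩, ?_⟩
    rintro g ⟨hg, hgφ⟩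
    obtain ⟨k, -, -, hgk⟩ := H.exists_eq_map hR hlt hge hdvd hg g.injective
    have hkh : k = h := funext fun v =>
      congrArg Prod.fst (Sum.inr_injective ((congrFun hgk _).symm.trans (hgφ v)))
    rw [hkh] at hgk
    exact DFunLike.coe_injective hgk

/-! ### Choice of the parameters -/

lemma exists_eq_add_six_mul (v M : ℕ) : ∃ N, ∀ u, N ≤ u → ∃ m x, u = x + 6 * v * m ∧ M ≤ m ∧
    x < m ∧ m ≤ 2 * x ∧ Nat.Coprime M.factorial m := by
  set K := M.factorial
  set D := 12 * v + 1 with hD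
  have hK : 0 < K := M.factorial_pos
  refine ⟨D * (D * K) + D, fun u hu => ?_⟩
  -- The largest `m ≡ 1` modulo `K` with `D * m ≤ 2 * u`.
  obtain ⟨j, hj⟩ : ∃ j, j = (2 * u - D) / (D * K) := ⟨_, rfl⟩
  have hle : j * (D * K) ≤ 2 * u - D := hj ▸ Nat.div_mul_le_self _ _
  have hlt : 2 * u - D < (j + 1) * (D * K) :=
    hj ▸ Nat.lt_mul_of_div_lt (Nat.lt_succ_self _) (Nat.mul_pos (by omega) hK)
  have hDj : D ≤ j := by
    rw [hj, Nat.le_div_iff_mul_le (Nat.mul_pos (by omega) hK)]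
    omega
  obtain ⟨m, hm⟩ : ∃ m, m = j * K + 1 := ⟨_, rfl⟩
  have hDK : D * K < m := hm ▸ Nat.lt_succ_of_le (Nat.mul_le_mul_right K hDj)
  have hupper : D * m ≤ 2 * u := by
    have : D * m = j * (D * K) + D := by rw [hm]; ring
    omega
  have hlower : 2 * u < D * m + D * K := by
    have : D * m + D * K = (j + 1) * (D * K) + D := by rw [hm]; ring
    omega
  have hDm : D * m = 2 * (6 * v * m) + m := by rw [hD]; ring
  refine ⟨m, u - 6 * v * m, by omega, ?_, by omega, by omega, ?_⟩
  · have : K ≤ D * K := Nat.le_mul_of_pos_left K (by omega)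
    have : M ≤ K := M.self_le_factorial
    omega
  · rw [hm, Nat.coprime_add_iff_right (Nat.dvd_mul_left _ _)]
    exact Nat.coprime_one_right K

lemma le_or_mul_le_of_dvd_six_mul {L m k : ℕ} (hm : 0 < m) (hL : Nat.Coprime L.factorial m)
    (hk : k ∣ 6 * m) : m ≤ k ∨ L * k ≤ 6 * m := by
  obtain ⟨j, hj⟩ := hk
  rcases le_total L j with hLj | hjL
  · exact Or.inr (by rw [hj, mul_comm k]; exact Nat.mul_le_mul_right k hLj)
  · have hj0 : 0 < j := Nat.pos_of_mul_pos_left (hj ▸ Nat.mul_pos (by norm_num) hm)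
    have hjm : Nat.Coprime j m := hL.coprime_dvd_left (Nat.dvd_factorial hj0 hjL)
    have hj6 : j ∣ 6 := hjm.dvd_of_dvd_mul_right ⟨k, by rw [hj, mul_comm]⟩
    have := Nat.mul_le_mul_left k (Nat.le_of_dvd (by norm_num) hj6)
    omega

lemma exists_rigid_card_eq {m n : ℕ} [NeZero m] (h3 : Nat.Coprime 3 m) (hn : 1 ≤ n)
    (hnm : n + 2 ≤ m) : ∃ P : Finset (ZMod m), Rigid P ∧ #P = n := by
  have : Fact (1 < m) := ⟨by omega⟩
  have : Fact (2 < m) := ⟨by omega⟩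
  have hcompl : n ≤ #({0, -1}ᶜ : Finset (ZMod m)) := by
    rw [card_compl, ZMod.card]
    have : #({0, -1} : Finset (ZMod m)) ≤ 2 := card_le_two
    omega
  have hone : ({1} : Finset (ZMod m)) ⊆ {0, -1}ᶜ := by
    simp [ZMod.neg_one_ne_one.symm]
  obtain ⟨P, hP1, hP, hPn⟩ := exists_subsuperset_card_eq hone (by simpa using hn) hcompl
  have h3u : IsUnit (3 : ZMod m) := by
    exact_mod_cast (ZMod.isUnit_iff_coprime 3 m).2 h3
  refine ⟨P, ⟨fun h => ?_, singleton_subset_iff.1 hP1, fun h => ?_,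
    fun r hr => h3u.mul_right_eq_zero.1 hr, (AddSubmonoid.eq_top_iff' _).2 fun r => ?_⟩, hPn⟩
  · simpa using hP h
  · simpa using hP h
  · simpa using nsmul_mem (AddSubmonoid.subset_closure (Set.mem_singleton (1 : ZMod m))) r.val

lemma exists_prescribesAut_of_embedsInOrder [Fintype α] [Nonempty α] (V : Squag α) {W : Squag β}
    {x m : ℕ} (hW : EmbedsInOrder W x) (hx : Odd x) (hxm : x < m) (hmx : m ≤ 2 * x)
    (hm60 : 60 < m) (hm : Nat.Coprime (288 * Fintype.card α).factorial m) :
    ∃ (U : Squag (Fin (x + 6 * Fintype.card α * m))) (ψ : β → _) (φ : α → _), IsHom W U ψ ∧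
      Function.Injective ψ ∧ (∀ b a, ψ b ≠ φ a) ∧ PrescribesAut V U φ := by
  have hcop {k : ℕ} (hk : 0 < k) (hk288 : k ≤ 288) : Nat.Coprime k m :=
    hm.coprime_dvd_left <| Nat.dvd_factorial hk <|
      hk288.trans (Nat.le_mul_of_pos_right _ Fintype.card_pos)
  have : NeZero m := ⟨by omega⟩
  obtain ⟨_⟩ := nonempty_invertible_two
    (Nat.coprime_two_left.1 (hcop (k := 2) (by norm_num) (by norm_num)))
  obtain ⟨P, H, hP⟩ := exists_rigid_card_eq (m := m) (n := (x - 3) / 2)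
    (hcop (by norm_num) (by norm_num)) (by omega) (by omega)
  have hlabel : Fintype.card (Label P) = x := by
    rw [card_label, hP]
    obtain ⟨c, rfl⟩ := hx
    omega
  obtain ⟨s, f, hfi, hf⟩ := hW
  let ε : Fin x ≃ Label P := Fintype.equivOfCardEq (by rw [hlabel, Fintype.card_fin])
  let _ : AddCommGroup ((ZMod 3 × ZMod m) ⊕ (ZMod 3 × ZMod m)) :=
    ((Equiv.boolProdEquivSum _).symm.trans
      (finTwoEquiv.symm.prodCongr (Equiv.refl _))).addCommGroup
  have hV := H.prescribesAut_moore V (s.map ε) (by rwa [ZMod.card])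
    (by rw [ZMod.card, hlabel]; omega) (by rwa [ZMod.card, hlabel])
    (fun k hk => by rw [ZMod.card] at hk ⊢; exact le_or_mul_le_of_dvd_six_mul (by omega) hm hk)
  have hcard : Fintype.card (Label P ⊕ α × ((ZMod 3 × ZMod m) ⊕ (ZMod 3 × ZMod m))) =
      Fintype.card (Fin (x + 6 * Fintype.card α * m)) := by
    simp only [Fintype.card_sum, hlabel, Fintype.card_prod, ZMod.card, Fintype.card_fin]
    ring
  have e := Fintype.equivOfCardEq hcard
  refine ⟨_, e ∘ Sum.inl ∘ ε ∘ f, _, (isHom_map _ e).comp ((isHom_moore_inl V _).comp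
    ((s.isHom_map ε).comp hf)), e.injective.comp (Sum.inl_injective.comp (ε.injective.comp hfi)),
    fun b a hba => Sum.inl_ne_inr (e.injective hba), hV.map e⟩

lemma exists_forall_prescribesAut [Finite α] [Nonempty α] [Finite β] (V : Squag α)
    (W : Squag β) : ∃ N, ∀ u, N ≤ u → u % 6 = 1 ∨ u % 6 = 3 →
      ∃ (U : Squag (Fin u)) (ψ : β → Fin u) (φ : α → Fin u), IsHom W U ψ ∧
        Function.Injective ψ ∧ (∀ b a, ψ b ≠ φ a) ∧ PrescribesAut V U φ := by
  have := Fintype.ofFinite α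
  obtain ⟨N₀, hN₀⟩ := exists_forall_embedsInOrder W
  obtain ⟨N, hN⟩ := exists_eq_add_six_mul (Fintype.card α) (288 * Fintype.card α + 2 * N₀)
  refine ⟨N, fun u hu hu6 => ?_⟩
  obtain ⟨m, x, rfl, hMm, hxm, hmx, hcop⟩ := hN u hu
  have hx6 : x % 6 = 1 ∨ x % 6 = 3 := by
    rwa [mul_assoc, Nat.add_mul_mod_self_left] at hu6
  have hα : 0 < Fintype.card α := Fintype.card_pos
  exact exists_prescribesAut_of_embedsInOrder V (hN₀ x (by omega) hx6)
    (Nat.odd_iff.2 (by omega)) hxm hmx (by omega)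
    (hcop.coprime_dvd_left (Nat.factorial_dvd_factorial (by omega)))

lemma exists_forall_fullEmbedding [Fintype α] [Finite β] (V : Squag α) (W : Squag β) :
    ∃ N, ∀ u, N ≤ u → u % 6 = 1 ∨ u % 6 = 3 →
      ∃ (U : Squag (Fin u)) (ψ : β → Fin u) (φ : α → Fin u), IsHom W U ψ ∧
        Function.Injective ψ ∧ (∀ b a, ψ b ≠ φ a) ∧ FullEmbedding V.triples U.triples φ := by
  rcases isEmpty_or_nonempty α with hα | hα
  · obtain ⟨N, hN⟩ := exists_forall_prescribesAut point W
    refine ⟨N, fun u hu hu6 => ?_⟩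
    obtain ⟨U, ψ, φ, hψ, hψi, -, hφ⟩ := hN u hu hu6
    exact ⟨U, ψ, isEmptyElim, hψ, hψi, fun _ => isEmptyElim, hφ.fullEmbedding_of_isEmpty V⟩
  · obtain ⟨N, hN⟩ := exists_forall_prescribesAut V W
    refine ⟨N, fun u hu hu6 => ?_⟩
    obtain ⟨U, ψ, φ, hψ, hψi, hdisj, hφ⟩ := hN u hu hu6
    exact ⟨U, ψ, φ, hψ, hψi, hdisj, hφ.fullEmbedding⟩

end Squag

/-- **Corollary 4.6.** Given Steiner triple systems `V` and `W`, there is an integer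
`N` such that, for `u ≥ N` and `u ≡ 1` or `3 (mod 6)`, there is a Steiner triple
system `U` on `u` points having a subsystem `W' ≅ W` and an `Aut U`-invariant
subsystem `V'' ≅ V` with `W' ∩ V'' = ∅`, on which `Aut U` induces `Aut V''` with
`Aut U ≅ Aut V''` via restriction. -/
theorem stmt16 {α γ : Type*} [Fintype α] [Fintype γ]
    (TV : Finset (Finset α)) (TW : Finset (Finset γ))
    (hV : IsSTS TV) (hW : IsSTS TW) :
    ∃ N : ℕ, ∀ u : ℕ, N ≤ u → u % 6 = 1 ∨ u % 6 = 3 →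
      ∃ T : Finset (Finset (Fin u)), IsSTS T ∧
        ∃ (ψ : γ → Fin u) (φ : α → Fin u),
          IsCopy TW T ψ ∧ IsSub T (Finset.univ.image ψ) ∧
          Finset.univ.image ψ ∩ Finset.univ.image φ = ∅ ∧
          FullEmbedding TV T φ := by
  obtain ⟨V, rfl⟩ := Squag.exists_triples_eq hV
  obtain ⟨W, rfl⟩ := Squag.exists_triples_eq hW
  obtain ⟨N, hN⟩ := Squag.exists_forall_fullEmbedding V W
  refine ⟨N, fun u hu hu6 => ?_⟩
  obtain ⟨U, ψ, φ, hψ, hψi, hdisj, hφ⟩ := hN u hu hu6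
  refine ⟨U.triples, U.isSTS_triples, ψ, φ, Squag.isCopy_of_isHom hψ hψi, ?_, ?_, hφ⟩
  · convert Squag.isSub_image_univ hψ
  · rw [← disjoint_iff_inter_eq_empty, disjoint_left]
    rintro _ hb ha
    obtain ⟨b, -, rfl⟩ := mem_image.1 hb
    obtain ⟨a, -, ha⟩ := mem_image.1 ha
    exact hdisj b a ha.symm

end
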